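/- Let 1 ≤ p, q, r, s ≤ ∞. Suppose there exists a constant C > 0 such that ‖L_σ f‖_{M^{r,s}} ≤ C · ‖σ‖_{M^{p,q}} · ‖f‖_{M^{r,s}} for all Schwartz σ on ℝ^{2d} and all Schwartz f on ℝ^d. Then there exists a constant C' > 0 such that ‖L_σ f‖_{M^{r',s'}} ≤ C' · ‖σ‖_{M^{p,q}} · ‖f‖_{M^{r',s'}} for all Schwartz σ on ℝ^{2d} and all Schwartz f on ℝ^d, where r', s' are the conjugate exponents of r, s (this holds also when r = ∞ or s = ∞). -/

import Mathlib

open MeasureTheory SchwartzMap Complex ENNReal NNReal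

noncomputable section

/-- Mixed `L^p`-type norm of an `ℝ≥0∞`-valued function, with the usual
`essSup` modification when `p = ∞`. -/
def lqNorm {α : Type*} [MeasurableSpace α] (μ : Measure α) (p : ℝ≥0∞)
    (f : α → ℝ≥0∞) : ℝ≥0∞ :=
  if p = ∞ then essSup f μ else (∫⁻ a, f a ^ p.toReal ∂μ) ^ (1 / p.toReal)

/-- Conjugate exponent in `ℝ≥0∞` : `1/p + 1/p' = 1`, with `1' = ∞`, `∞' = 1`. -/
def dualExp (p : ℝ≥0∞) : ℝ≥0∞ :=
  if p = 1 then ∞ else if p = ∞ then 1 else ENNReal.ofReal (p.toReal / (p.toReal - 1))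

/-- `1/p` as a real number, with the convention `1/∞ = 0`. -/
def invR (p : ℝ≥0∞) : ℝ := (p⁻¹).toReal

/-- The Gaussian window `G(t) = exp(-π |t|²)` (as a complex-valued function). -/
def gaussWin {ι : Type*} [Fintype ι] (t : EuclideanSpace ℝ ι) : ℂ :=
  Complex.exp (-(Real.pi * ‖t‖ ^ 2))

/-- Short-time Fourier transform with Gaussian window:
`V_G F (x, ω) = ∫ F t * conj (G (t - x)) * exp (-2πi ω⬝t) dt`. -/
def STFT {ι : Type*} [Fintype ι] (F : EuclideanSpace ℝ ι → ℂ)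
    (x ω : EuclideanSpace ℝ ι) : ℂ :=
  ∫ t, F t * (starRingEnd ℂ) (gaussWin (t - x)) *
    Complex.exp (Complex.I * (-(2 * Real.pi * (inner ℝ ω t : ℝ))))

/-- Modulation space norm `M^{p,q}`. -/
def modNorm {ι : Type*} [Fintype ι] (p q : ℝ≥0∞)
    (F : EuclideanSpace ℝ ι → ℂ) : ℝ≥0∞ :=
  lqNorm volume q fun ω => lqNorm volume p fun x => (‖STFT F x ω‖₊ : ℝ≥0∞)

/-- Wiener amalgam norm `W(𝓕 L^p, L^q)` (local component Fourier–Lebesgue). -/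
def wFLNorm {ι : Type*} [Fintype ι] (p q : ℝ≥0∞)
    (F : EuclideanSpace ℝ ι → ℂ) : ℝ≥0∞ :=
  lqNorm volume q fun x => lqNorm volume p fun ω => (‖STFT F x ω‖₊ : ℝ≥0∞)

/-- The unit cube `[0,1)^d`. -/
def unitCube (d : ℕ) : Set (EuclideanSpace ℝ (Fin d)) :=
  {x | ∀ i, x i ∈ Set.Ico (0 : ℝ) 1}

/-- Wiener amalgam norm
`‖f‖_{W(L^r,L^s)} = ( Σ_{n ∈ ℤ^d} ( ∫_{[0,1)^d} |f(x+n)|^r dx )^{s/r} )^{1/s}`. -/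
def wNorm (d : ℕ) (r s : ℝ≥0∞) (f : EuclideanSpace ℝ (Fin d) → ℂ) : ℝ≥0∞ :=
  lqNorm (Measure.count : Measure (Fin d → ℤ)) s fun n =>
    lqNorm (volume.restrict (unitCube d)) r fun x =>
      (‖f (x + show EuclideanSpace ℝ (Fin d) from WithLp.toLp 2 fun i => (n i : ℝ))‖₊ : ℝ≥0∞)

/-- Pairing `(x, ω) ∈ ℝ^d × ℝ^d ↦ ℝ^{2d}`. -/
def pairE {d : ℕ} (x ω : EuclideanSpace ℝ (Fin d)) :
    EuclideanSpace ℝ (Fin d ⊕ Fin d) :=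
  WithLp.toLp 2 fun i => Sum.elim (fun j => x j) (fun j => ω j) i

/-- First (space) component of a point of `ℝ^{2d}`. -/
def xpart {d : ℕ} (z : EuclideanSpace ℝ (Fin d ⊕ Fin d)) :
    EuclideanSpace ℝ (Fin d) := WithLp.toLp 2 fun i => z (Sum.inl i)

/-- Second (frequency) component of a point of `ℝ^{2d}`. -/
def wpart {d : ℕ} (z : EuclideanSpace ℝ (Fin d ⊕ Fin d)) :
    EuclideanSpace ℝ (Fin d) := WithLp.toLp 2 fun i => z (Sum.inr i)

/-- Fourier transform `f̂(ω) = ∫ f t e^{-2πi t⬝ω} dt`. -/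
def fTrans {ι : Type*} [Fintype ι] (f : EuclideanSpace ℝ ι → ℂ)
    (ω : EuclideanSpace ℝ ι) : ℂ :=
  ∫ t, f t * Complex.exp (Complex.I * (-(2 * Real.pi * (inner ℝ t ω : ℝ))))

/-- Kohn–Nirenberg operator `a(x,D) f (x) = ∫ a(x,ω) f̂(ω) e^{2πi x⬝ω} dω`. -/
def KNop {d : ℕ} (a : EuclideanSpace ℝ (Fin d ⊕ Fin d) → ℂ)
    (f : EuclideanSpace ℝ (Fin d) → ℂ) (x : EuclideanSpace ℝ (Fin d)) : ℂ :=
  ∫ ω, a (pairE x ω) * fTrans f ω *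
    Complex.exp (Complex.I * (2 * Real.pi * (inner ℝ x ω : ℝ)))

/-- Weyl operator `L_σ f (x) = ∫∫ e^{2πi (x-y)⬝ω} σ((x+y)/2, ω) f(y) dy dω`. -/
def weylOp {d : ℕ} (σ : EuclideanSpace ℝ (Fin d ⊕ Fin d) → ℂ)
    (f : EuclideanSpace ℝ (Fin d) → ℂ) (x : EuclideanSpace ℝ (Fin d)) : ℂ :=
  ∫ y, ∫ ω, Complex.exp (Complex.I * (2 * Real.pi * (inner ℝ (x - y) ω : ℝ))) *
    σ (pairE ((2 : ℝ)⁻¹ • (x + y)) ω) * f y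

/-- Cross-Wigner distribution
`W(g,f)(x,ω) = ∫ g(x+t/2) conj(f(x−t/2)) e^{−2πi ω⬝t} dt`. -/
def wigner {d : ℕ} (g f : EuclideanSpace ℝ (Fin d) → ℂ)
    (z : EuclideanSpace ℝ (Fin d ⊕ Fin d)) : ℂ :=
  ∫ t, g (xpart z + (2 : ℝ)⁻¹ • t) * (starRingEnd ℂ) (f (xpart z - (2 : ℝ)⁻¹ • t)) *
    Complex.exp (Complex.I * (-(2 * Real.pi * (inner ℝ (wpart z) t : ℝ))))

end

/-!
The adjoint of `L_σ` is `L_σ̄`, and complex conjugation preserves the `M^{p,q}` norm of the symbol.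
So the claim follows once modulation norms with conjugate exponents are shown to be dual to each
other on Schwartz functions, up to a constant.

One direction is Moyal's identity, `‖G‖² ⟨f, h⟩ = ⟨V_G f, V_G h⟩`, together with Hölder's
inequality. For the other, the norm of `V_G F` in the mixed space `L^{r',s'}` is the supremum of its
pairings with bounded compactly supported densities `Ψ` whose mixed norm in `L^{r,s}` is at most
one. Each such pairing equals `⟨F, f⟩` for the superposition `f` of Gaussian wave packets weighted
by `Ψ`. This `f` is a Schwartz function, and `|V_G f| ≤ |Ψ| ∗ |V_G G|`, so Young's inequality bounds
its `M^{r,s}` norm by `‖V_G G‖₁`. Since only the densities are truncated, density of the Schwartz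
functions in `M^{r,s}` is never needed and infinite exponents require no separate treatment.
-/

section LqNorm

variable {α β : Type*} [MeasurableSpace α] [MeasurableSpace β] {μ : Measure α} {p q : ℝ≥0∞}
  {f g : α → ℝ≥0∞}

theorem lqNorm_top : lqNorm μ ∞ f = essSup f μ := by simp [lqNorm]

theorem lqNorm_one : lqNorm μ 1 f = ∫⁻ a, f a ∂μ := by simp [lqNorm]

theorem lqNorm_of_ne_top (hp : p ≠ ∞) :
    lqNorm μ p f = (∫⁻ a, f a ^ p.toReal ∂μ) ^ p.toReal⁻¹ := by simp [lqNorm, hp]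

theorem lqNorm_rpow_toReal (hp₀ : p ≠ 0) (hp : p ≠ ∞) :
    lqNorm μ p f ^ p.toReal = ∫⁻ a, f a ^ p.toReal ∂μ := by
  rw [lqNorm_of_ne_top hp, ENNReal.rpow_inv_rpow (ENNReal.toReal_pos hp₀ hp).ne']

theorem lqNorm_le_iff_lintegral_rpow_le (hp₀ : p ≠ 0) (hp : p ≠ ∞) {c : ℝ≥0∞} :
    lqNorm μ p f ≤ c ↔ ∫⁻ a, f a ^ p.toReal ∂μ ≤ c ^ p.toReal := by
  rw [← lqNorm_rpow_toReal hp₀ hp, ENNReal.rpow_le_rpow_iff (ENNReal.toReal_pos hp₀ hp)]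

theorem lqNorm_mono (h : ∀ a, f a ≤ g a) : lqNorm μ p f ≤ lqNorm μ p g := by
  unfold lqNorm
  split_ifs
  · exact essSup_mono_ae (.of_forall h)
  · gcongr
    exact h _

theorem lqNorm_zero (hp : p ≠ 0) : lqNorm μ p (fun _ => 0) = 0 := by
  by_cases hp' : p = ∞
  · rw [hp', lqNorm_top, ← ENNReal.bot_eq_zero, essSup_const_bot]
  · simp [lqNorm_of_ne_top hp', ENNReal.toReal_pos hp hp']

theorem lqNorm_mul_const_le (hp : p ≠ 0) (hf : Measurable f) (c : ℝ≥0∞) :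
    lqNorm μ p (fun a => f a * c) ≤ lqNorm μ p f * c := by
  by_cases hp' : p = ∞
  · subst hp'
    rw [lqNorm_top, lqNorm_top]
    exact essSup_le_of_ae_le _ ((ENNReal.ae_le_essSup f).mono fun a ha => mul_le_mul_left ha c)
  · rw [lqNorm_le_iff_lintegral_rpow_le hp hp', ENNReal.mul_rpow_of_nonneg _ _ toReal_nonneg,
      lqNorm_rpow_toReal hp hp', ← lintegral_mul_const _ (hf.pow_const _)]
    simp_rw [ENNReal.mul_rpow_of_nonneg _ _ toReal_nonneg, le_refl]

theorem lqNorm_iSup_le {f : ℕ → α → ℝ≥0∞} (hp : p ≠ 0) (hf : ∀ n, Measurable (f n))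
    (hmono : Monotone f) : lqNorm μ p (fun a => ⨆ n, f n a) ≤ ⨆ n, lqNorm μ p (f n) := by
  by_cases hp' : p = ∞
  · subst hp'
    simp_rw [lqNorm_top]
    exact essSup_le_of_ae_le _
      ((ae_all_iff.2 fun n => ENNReal.ae_le_essSup (f n)).mono fun a ha => iSup_mono ha)
  · have rpow_iSup (a : α) : (⨆ n, f n a) ^ p.toReal = ⨆ n, f n a ^ p.toReal :=
      (ENNReal.orderIsoRpow p.toReal (ENNReal.toReal_pos hp hp')).map_iSup _
    simp_rw [lqNorm_le_iff_lintegral_rpow_le hp hp', rpow_iSup]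
    rw [lintegral_iSup (fun n => (hf n).pow_const _)
      (fun m n hmn a => ENNReal.rpow_le_rpow (hmono hmn a) toReal_nonneg)]
    refine iSup_le fun n => ?_
    rw [← lqNorm_le_iff_lintegral_rpow_le hp hp']
    exact le_iSup (fun n => lqNorm μ p (f n)) n

theorem lqNorm_ne_top_of_le_of_support_subset (hp : p ≠ 0) {s : Set α} (hs : MeasurableSet s)
    (hμs : μ s ≠ ∞) {c : ℝ≥0∞} (hc : c ≠ ∞) (hle : ∀ a, f a ≤ c)
    (hsupp : Function.support f ⊆ s) : lqNorm μ p f ≠ ∞ := by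
  by_cases hp' : p = ∞
  · subst hp'
    rw [lqNorm_top]
    exact ne_top_of_le_ne_top hc (essSup_le_of_ae_le _ (.of_forall hle))
  have hpos := ENNReal.toReal_pos hp hp'
  have rpow_le (a : α) : f a ^ p.toReal ≤ s.indicator (fun _ => c ^ p.toReal) a := by
    by_cases ha : a ∈ s
    · simpa only [Set.indicator_of_mem ha] using ENNReal.rpow_le_rpow (hle a) hpos.le
    · simp [Set.indicator_of_notMem ha, Function.notMem_support.1 (mt (@hsupp a) ha), hpos]
  rw [lqNorm_of_ne_top hp']
  refine ENNReal.rpow_ne_top_of_nonneg (by positivity)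
    (ne_top_of_le_ne_top ?_ (lintegral_mono rpow_le))
  rw [lintegral_indicator_const hs]
  exact ENNReal.mul_ne_top (ENNReal.rpow_ne_top_of_nonneg hpos.le hc) hμs

theorem lqNorm_comp_measurePreserving {ν : Measure β} {e : β ≃ᵐ α} (he : MeasurePreserving e ν μ) :
    lqNorm ν p (fun b => f (e b)) = lqNorm μ p f := by
  unfold lqNorm
  split_ifs
  · rw [← he.map_eq]
    exact e.measurableEmbedding.essSup_map_measure.symm
  · rw [he.lintegral_comp_emb e.measurableEmbedding (fun a => f a ^ p.toReal)]

theorem essSup_le_iff_ae_le {c : ℝ≥0∞} : essSup f μ ≤ c ↔ ∀ᵐ a ∂μ, f a ≤ c :=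
  ⟨fun h => (ENNReal.ae_le_essSup f).mono fun _ ha => ha.trans h, essSup_le_of_ae_le _⟩

theorem measurable_lqNorm_prodMk_left [SFinite μ] {F : β × α → ℝ≥0∞} (hF : Measurable F) :
    Measurable fun b => lqNorm μ p fun a => F (b, a) := by
  by_cases hp : p = ∞
  · subst hp
    simp_rw [lqNorm_top]
    refine measurable_of_Iic fun c => ?_
    have preimage_eq : (fun b => essSup (fun a => F (b, a)) μ) ⁻¹' Set.Iic c =
        (fun b => μ (Prod.mk b ⁻¹' {z | c < F z})) ⁻¹' {0} := by
      ext b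
      simp [essSup_le_iff_ae_le, ae_iff]
    rw [preimage_eq]
    exact measurable_measure_prodMk_left (measurableSet_lt measurable_const hF)
      (measurableSet_singleton 0)
  · simp_rw [lqNorm_of_ne_top hp]
    exact (hF.pow_const _).lintegral_prod_right'.pow_const _

theorem lintegral_mul_le_essSup_mul_lintegral (hg : Measurable g) :
    ∫⁻ a, f a * g a ∂μ ≤ essSup f μ * ∫⁻ a, g a ∂μ := by
  rw [← lintegral_const_mul _ hg]
  exact lintegral_mono_ae ((ENNReal.ae_le_essSup f).mono fun a ha => mul_le_mul_left ha _)

theorem lintegral_mul_le_lqNorm_mul_lqNorm [hpq : p.HolderConjugate q] (hf : Measurable f)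
    (hg : Measurable g) : ∫⁻ a, f a * g a ∂μ ≤ lqNorm μ p f * lqNorm μ q g := by
  by_cases hp : p = ∞
  · obtain rfl := (HolderConjugate.eq_top_iff_eq_one p q).1 hp
    rw [hp, lqNorm_top, lqNorm_one]
    exact lintegral_mul_le_essSup_mul_lintegral hg
  by_cases hq : q = ∞
  · obtain rfl := (HolderConjugate.eq_top_iff_eq_one q p).1 hq
    rw [hq, lqNorm_top, lqNorm_one, mul_comm]
    simp_rw [mul_comm (f _)]
    exact lintegral_mul_le_essSup_mul_lintegral hf
  · rw [lqNorm_of_ne_top hp, lqNorm_of_ne_top hq, ← one_div, ← one_div]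
    exact ENNReal.lintegral_mul_le_Lp_mul_Lq μ (HolderConjugate.toReal_of_ne_top hp hq)
      hf.aemeasurable hg.aemeasurable

theorem holderConjugate_dualExp (hp : 1 ≤ p) : p.HolderConjugate (dualExp p) := by
  unfold dualExp
  split_ifs with h₁ h₂
  · exact h₁ ▸ HolderConjugate.one_top
  · exact h₂ ▸ HolderConjugate.top_one
  · have one_lt : 1 < p.toReal := by
      simpa using (ENNReal.toReal_lt_toReal one_ne_top h₂).2 (hp.lt_of_ne' h₁)
    simpa [ENNReal.ofReal_toReal h₂, Real.conjExponent] using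
      (Real.HolderConjugate.conjExponent one_lt).ennrealOfReal

end LqNorm

section HolderExtremizer

variable {α β : Type*} [MeasurableSpace α] [MeasurableSpace β] {μ : Measure α} {p q : ℝ≥0∞}
  {f : α → ℝ≥0∞} {θ : ℝ≥0∞}

/-- A nonnegative function of norm at most `1` in the dual of `L^q`, whose pairing with `f` is at
least `θ` times the `L^q` norm of `f`. The factor `θ < 1` is needed for `q = ∞` only, where the
function is the normalised indicator of a set on which `f` exceeds `θ` times its norm. -/
noncomputable def holderExtremizer (μ : Measure α) (q θ : ℝ≥0∞) (f : α → ℝ≥0∞) (a : α) : ℝ≥0∞ :=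
  if q = ∞ then
    {b | θ * lqNorm μ q f < f b}.indicator (fun _ => (μ {b | θ * lqNorm μ q f < f b})⁻¹) a
  else (f a / lqNorm μ q f) ^ (q.toReal - 1)

theorem measurable_holderExtremizer (hf : Measurable f) :
    Measurable (holderExtremizer μ q θ f) := by
  unfold holderExtremizer
  split_ifs
  · exact measurable_const.indicator (measurableSet_lt measurable_const hf)
  · exact (hf.div measurable_const).pow_const _

theorem measurable_holderExtremizer_prodMk_left [SFinite μ] {F : β × α → ℝ≥0∞} (hF : Measurable F) :
    Measurable fun z : β × α => holderExtremizer μ q θ (fun a => F (z.1, a)) z.2 := by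
  have measurable_norm : Measurable fun z : β × α => lqNorm μ q fun a => F (z.1, a) :=
    (measurable_lqNorm_prodMk_left hF).comp measurable_fst
  unfold holderExtremizer
  split_ifs
  · have measurableSet_superlevel : MeasurableSet {z : β × α |
        θ * lqNorm μ q (fun a => F (z.1, a)) < F z} :=
      measurableSet_lt (measurable_const.mul measurable_norm) hF
    exact ((measurable_measure_prodMk_left measurableSet_superlevel).comp
      measurable_fst).inv.indicator measurableSet_superlevel
  · exact (hF.div measurable_norm).pow_const _

theorem lqNorm_holderExtremizer_le_one [p.HolderConjugate q] (hf : Measurable f) :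
    lqNorm μ p (holderExtremizer μ q θ f) ≤ 1 := by
  by_cases hq : q = ∞
  · obtain rfl := (HolderConjugate.eq_top_iff_eq_one q p).1 hq
    simp_rw [lqNorm_one, holderExtremizer, if_pos hq]
    rw [lintegral_indicator_const (measurableSet_lt measurable_const hf)]
    exact ENNReal.inv_mul_le_one _
  have holderExtremizer_eq : holderExtremizer μ q θ f =
      fun a => (f a / lqNorm μ q f) ^ (q.toReal - 1) := by
    ext a
    rw [holderExtremizer, if_neg hq]
  rw [holderExtremizer_eq]
  by_cases hp : p = ∞
  · obtain rfl := (HolderConjugate.eq_top_iff_eq_one p q).1 hp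
    rw [hp, lqNorm_top, essSup_le_iff_ae_le]
    simp
  have conj := HolderConjugate.toReal_of_ne_top hp hq
  have hq₀ := HolderConjugate.ne_zero q p
  rw [lqNorm_le_iff_lintegral_rpow_le (HolderConjugate.ne_zero p q) hp, ENNReal.one_rpow]
  simp_rw [← ENNReal.rpow_mul, conj.symm.sub_one_mul_conj,
    ENNReal.div_rpow_of_nonneg _ _ toReal_nonneg, div_eq_mul_inv]
  rw [lintegral_mul_const _ (hf.pow_const _), ← lqNorm_rpow_toReal hq₀ hq]
  exact ENNReal.mul_inv_le_one _

theorem mul_lqNorm_le_lintegral_mul_holderExtremizer_of_ne_top (hq₁ : 1 ≤ q) (hq : q ≠ ∞)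
    (hf : Measurable f) (hθ : θ ≤ 1) (hnorm : lqNorm μ q f ≠ ∞) :
    θ * lqNorm μ q f ≤ ∫⁻ a, f a * holderExtremizer μ q θ f a ∂μ := by
  have hq₀ : q ≠ 0 := (zero_lt_one.trans_le hq₁).ne'
  have one_le_toReal : 1 ≤ q.toReal := by simpa using ENNReal.toReal_mono hq hq₁
  rcases eq_or_ne (lqNorm μ q f) 0 with h₀ | h₀
  · simp [h₀]
  set N := lqNorm μ q f with hN
  have mul_extremizer (a : α) :
      f a * holderExtremizer μ q θ f a = N * (f a ^ q.toReal * (N ^ q.toReal)⁻¹) :=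
    calc f a * holderExtremizer μ q θ f a
      _ = N * ((f a / N) * (f a / N) ^ (q.toReal - 1)) := by
          rw [holderExtremizer, if_neg hq, ← mul_assoc, ENNReal.mul_div_cancel h₀ hnorm]
      _ = N * (f a ^ q.toReal * (N ^ q.toReal)⁻¹) := by
          nth_rw 1 [← ENNReal.rpow_one (f a / N)]
          rw [← ENNReal.rpow_add_of_nonneg _ _ zero_le_one (by linarith), add_sub_cancel,
            ENNReal.div_rpow_of_nonneg _ _ toReal_nonneg, div_eq_mul_inv]
  simp_rw [mul_extremizer]
  rw [lintegral_const_mul _ ((hf.pow_const _).mul_const _),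
    lintegral_mul_const _ (hf.pow_const _), ← lqNorm_rpow_toReal hq₀ hq, ← hN,
    ENNReal.mul_inv_cancel (by simp [h₀, hnorm])
      (ENNReal.rpow_ne_top_of_nonneg toReal_nonneg hnorm), mul_one]
  exact mul_le_of_le_one_left' hθ

theorem mul_lqNorm_top_le_lintegral_mul_holderExtremizer (hf : Measurable f) (hθ : θ < 1)
    (hnorm : lqNorm μ ∞ f ≠ ∞) (hsupp : μ (Function.support f) ≠ ∞) :
    θ * lqNorm μ ∞ f ≤ ∫⁻ a, f a * holderExtremizer μ ∞ θ f a ∂μ := by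
  rcases eq_or_ne (lqNorm μ ∞ f) 0 with h₀ | h₀
  · simp [h₀]
  set S := {a | θ * lqNorm μ ∞ f < f a} with hS
  have measurableSet_S : MeasurableSet S := measurableSet_lt measurable_const hf
  have measure_ne_zero : μ S ≠ 0 := fun hμS => by
    have : lqNorm μ ∞ f ≤ θ * lqNorm μ ∞ f := by
      nth_rw 1 [lqNorm_top]
      rw [essSup_le_iff_ae_le, ae_iff]
      simpa using hμS
    exact this.not_gt (by simpa using ENNReal.mul_lt_mul_left h₀ hnorm hθ)
  have measure_ne_top : μ S ≠ ∞ :=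
    ne_top_of_le_ne_top hsupp (measure_mono fun a ha => (zero_le.trans_lt ha).ne')
  calc θ * lqNorm μ ∞ f
    _ = ∫⁻ _ in S, θ * lqNorm μ ∞ f * (μ S)⁻¹ ∂μ := by
        rw [setLIntegral_const, mul_assoc, ENNReal.inv_mul_cancel measure_ne_zero measure_ne_top,
          mul_one]
    _ ≤ ∫⁻ a in S, f a * (μ S)⁻¹ ∂μ :=
        setLIntegral_mono' measurableSet_S fun a ha => mul_le_mul_left ha.le _
    _ = ∫⁻ a, f a * holderExtremizer μ ∞ θ f a ∂μ := by
        rw [← lintegral_indicator measurableSet_S]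
        simp_rw [holderExtremizer, if_pos, ← hS, Set.indicator_mul_right]

theorem mul_lqNorm_le_lintegral_mul_holderExtremizer (hq : 1 ≤ q) (hf : Measurable f)
    (hθ : θ < 1) (hnorm : lqNorm μ q f ≠ ∞) (hsupp : μ (Function.support f) ≠ ∞) :
    θ * lqNorm μ q f ≤ ∫⁻ a, f a * holderExtremizer μ q θ f a ∂μ := by
  rcases eq_or_ne q ∞ with rfl | hq_top
  · exact mul_lqNorm_top_le_lintegral_mul_holderExtremizer hf hθ hnorm hsupp
  · exact mul_lqNorm_le_lintegral_mul_holderExtremizer_of_ne_top hq hq_top hf hθ.le hnorm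

end HolderExtremizer

section Truncation

variable {γ : Type*} {K : ℕ → Set γ} {f : γ → ℝ≥0∞}

/-- The function `f` cut off at height `n` and restricted to the `n`-th set of an exhaustion `K`. -/
noncomputable def truncation (K : ℕ → Set γ) (f : γ → ℝ≥0∞) (n : ℕ) : γ → ℝ≥0∞ :=
  (K n).indicator fun z => min (f z) n

theorem truncation_le_natCast (n : ℕ) (z : γ) : truncation K f n z ≤ n :=
  Set.indicator_apply_le' (fun _ => min_le_right _ _) fun _ => zero_le

theorem truncation_le (n : ℕ) (z : γ) : truncation K f n z ≤ f z :=
  Set.indicator_apply_le' (fun _ => min_le_left _ _) fun _ => zero_le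

theorem support_truncation_subset (n : ℕ) : Function.support (truncation K f n) ⊆ K n :=
  Set.support_indicator_subset

theorem monotone_truncation (hK : Monotone K) : Monotone (truncation K f) := fun m n hmn z =>
  calc truncation K f m z
    _ ≤ (K m).indicator (fun z => min (f z) n) z :=
        Set.indicator_le_indicator (min_le_min_left _ (Nat.cast_le.2 hmn))
    _ ≤ truncation K f n z := Set.indicator_le_indicator_of_subset (hK hmn) (fun _ => zero_le) z

theorem iSup_truncation (hK : Monotone K) (hK_univ : ⋃ n, K n = Set.univ) (z : γ) :
    ⨆ n, truncation K f n z = f z := by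
  refine le_antisymm (iSup_le fun n => truncation_le n z) ?_
  obtain ⟨k, hk⟩ := Set.mem_iUnion.1 (hK_univ ▸ Set.mem_univ z)
  refine le_of_forall_lt fun c hc => ?_
  obtain ⟨n, hn⟩ := ENNReal.exists_nat_gt hc.ne_top
  have hz : z ∈ K (max k n) := hK (le_max_left k n) hk
  have hcn : c < (max k n : ℕ) := hn.trans_le (Nat.cast_le.2 (le_max_right k n))
  refine lt_iSup_iff.2 ⟨max k n, ?_⟩
  rw [truncation, Set.indicator_of_mem hz]
  exact lt_min hc hcn

theorem measurable_truncation [MeasurableSpace γ] (hK : ∀ n, MeasurableSet (K n))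
    (hf : Measurable f) (n : ℕ) : Measurable (truncation K f n) :=
  (hf.min measurable_const).indicator (hK n)

end Truncation

section MixedNorm

variable {α β γ : Type*} [MeasurableSpace α] [MeasurableSpace β] [MeasurableSpace γ]
  {μ : Measure α} {ν : Measure β} {p p' q q' : ℝ≥0∞} {F G : β × α → ℝ≥0∞}

/-- The mixed Lebesgue norm: `L^p` in the second variable, then `L^q` in the first one, as in
the modulation norms, where the second variable is the position and the first the frequency. -/
noncomputable def mixedNorm (μ : Measure α) (ν : Measure β) (p q : ℝ≥0∞) (F : β × α → ℝ≥0∞) :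
    ℝ≥0∞ :=
  lqNorm ν q fun b => lqNorm μ p fun a => F (b, a)

theorem mixedNorm_mono (h : ∀ z, F z ≤ G z) : mixedNorm μ ν p q F ≤ mixedNorm μ ν p q G :=
  lqNorm_mono fun _ => lqNorm_mono fun _ => h _

theorem mixedNorm_mul_const_le [SFinite μ] (hp : p ≠ 0) (hq : q ≠ 0) (hF : Measurable F)
    (c : ℝ≥0∞) : mixedNorm μ ν p q (fun z => F z * c) ≤ mixedNorm μ ν p q F * c :=
  (lqNorm_mono fun _ => lqNorm_mul_const_le hp (hF.comp measurable_prodMk_left) c).trans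
    (lqNorm_mul_const_le hq (measurable_lqNorm_prodMk_left hF) c)

theorem mixedNorm_iSup_le [SFinite μ] (hp : p ≠ 0) (hq : q ≠ 0) {F : ℕ → β × α → ℝ≥0∞}
    (hF : ∀ n, Measurable (F n)) (hmono : Monotone F) :
    mixedNorm μ ν p q (fun z => ⨆ n, F n z) ≤ ⨆ n, mixedNorm μ ν p q (F n) :=
  calc mixedNorm μ ν p q (fun z => ⨆ n, F n z)
    _ ≤ lqNorm ν q fun b => ⨆ n, lqNorm μ p fun a => F n (b, a) :=
        lqNorm_mono fun b => lqNorm_iSup_le (f := fun n a => F n (b, a)) hp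
          (fun n => (hF n).comp measurable_prodMk_left) fun _ _ hmn _ => hmono hmn _
    _ ≤ ⨆ n, mixedNorm μ ν p q (F n) :=
        lqNorm_iSup_le (f := fun n b => lqNorm μ p fun a => F n (b, a)) hq
          (fun n => measurable_lqNorm_prodMk_left (hF n))
          fun _ _ hmn _ => lqNorm_mono fun _ => hmono hmn _

theorem measurable_mixedNorm_prodMk_right [SFinite μ] [SFinite ν] {H : (β × α) × γ → ℝ≥0∞}
    (hH : Measurable H) : Measurable fun w => mixedNorm μ ν p q fun z => H (z, w) :=
  measurable_lqNorm_prodMk_left (F := fun y : γ × β => lqNorm μ p fun a => H ((y.2, a), y.1))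
    (measurable_lqNorm_prodMk_left (F := fun y : (γ × β) × α => H ((y.1.2, y.2), y.1.1))
      (hH.comp (by fun_prop)))

theorem lintegral_mul_le_mixedNorm_mul_mixedNorm [SFinite μ] [SFinite ν] [p.HolderConjugate p']
    [q.HolderConjugate q'] (hF : Measurable F) (hG : Measurable G) :
    ∫⁻ z, F z * G z ∂(ν.prod μ) ≤ mixedNorm μ ν p q F * mixedNorm μ ν p' q' G := by
  rw [lintegral_prod (fun z => F z * G z) (hF.mul hG).aemeasurable]
  exact (lintegral_mono fun b => lintegral_mul_le_lqNorm_mul_lqNorm (p := p) (q := p')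
      (hF.comp measurable_prodMk_left) (hG.comp measurable_prodMk_left)).trans
    (lintegral_mul_le_lqNorm_mul_lqNorm (measurable_lqNorm_prodMk_left hF)
      (measurable_lqNorm_prodMk_left hG))

/-- The mixed-norm analogue of `holderExtremizer`: extremise in the inner variable, then extremise
the inner norms in the outer variable. -/
noncomputable def mixedExtremizer (μ : Measure α) (ν : Measure β) (p q θ : ℝ≥0∞)
    (F : β × α → ℝ≥0∞) (z : β × α) : ℝ≥0∞ :=
  holderExtremizer μ p θ (fun a => F (z.1, a)) z.2 *
    holderExtremizer ν q θ (fun b => lqNorm μ p fun a => F (b, a)) z.1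

theorem measurable_mixedExtremizer [SFinite μ] (hF : Measurable F) (θ : ℝ≥0∞) :
    Measurable (mixedExtremizer μ ν p q θ F) :=
  (measurable_holderExtremizer_prodMk_left hF).mul
    ((measurable_holderExtremizer (measurable_lqNorm_prodMk_left hF)).comp measurable_fst)

theorem mixedNorm_mixedExtremizer_le_one [SFinite μ] [p.HolderConjugate p']
    [q.HolderConjugate q'] (hF : Measurable F) (θ : ℝ≥0∞) :
    mixedNorm μ ν p q (mixedExtremizer μ ν p' q' θ F) ≤ 1 := by
  set w := holderExtremizer ν q' θ fun b => lqNorm μ p' fun a => F (b, a)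
  have inner_le (b : β) : lqNorm μ p (fun a => mixedExtremizer μ ν p' q' θ F (b, a)) ≤ w b :=
    calc lqNorm μ p (fun a => mixedExtremizer μ ν p' q' θ F (b, a))
      _ ≤ lqNorm μ p (holderExtremizer μ p' θ fun a => F (b, a)) * w b :=
          lqNorm_mul_const_le (HolderConjugate.ne_zero p p')
            (measurable_holderExtremizer (hF.comp measurable_prodMk_left)) (w b)
      _ ≤ w b := mul_le_of_le_one_left'
          (lqNorm_holderExtremizer_le_one (hF.comp measurable_prodMk_left))
  exact (lqNorm_mono inner_le).trans
    (lqNorm_holderExtremizer_le_one (measurable_lqNorm_prodMk_left hF))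

theorem mul_mixedNorm_le_lintegral_mul_mixedExtremizer [SFinite μ] [SFinite ν] (hp : 1 ≤ p)
    (hq : 1 ≤ q) (hF : Measurable F) {θ : ℝ≥0∞} (hθ : θ < 1)
    (hnorm : mixedNorm μ ν p q F ≠ ∞) (hnorm_inner : ∀ b, lqNorm μ p (fun a => F (b, a)) ≠ ∞)
    (hsupp : ν (Function.support fun b => lqNorm μ p fun a => F (b, a)) ≠ ∞)
    (hsupp_inner : ∀ b, μ (Function.support fun a => F (b, a)) ≠ ∞) :
    θ * (θ * mixedNorm μ ν p q F) ≤ ∫⁻ z, F z * mixedExtremizer μ ν p q θ F z ∂(ν.prod μ) := by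
  set w := holderExtremizer ν q θ fun b => lqNorm μ p fun a => F (b, a)
  have measurable_norm := measurable_lqNorm_prodMk_left (μ := μ) (p := p) hF
  calc θ * (θ * mixedNorm μ ν p q F)
    _ ≤ θ * ∫⁻ b, lqNorm μ p (fun a => F (b, a)) * w b ∂ν := by
        gcongr
        exact mul_lqNorm_le_lintegral_mul_holderExtremizer hq measurable_norm hθ hnorm hsupp
    _ = ∫⁻ b, θ * lqNorm μ p (fun a => F (b, a)) * w b ∂ν := by
        simp_rw [mul_assoc]
        exact (lintegral_const_mul _
          (measurable_norm.mul (measurable_holderExtremizer measurable_norm))).symm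
    _ ≤ ∫⁻ b, (∫⁻ a, F (b, a) * holderExtremizer μ p θ (fun a => F (b, a)) a ∂μ) * w b ∂ν := by
        gcongr with b
        exact mul_lqNorm_le_lintegral_mul_holderExtremizer hp (hF.comp measurable_prodMk_left) hθ
          (hnorm_inner b) (hsupp_inner b)
    _ ≤ ∫⁻ b, ∫⁻ a, F (b, a) * mixedExtremizer μ ν p q θ F (b, a) ∂μ ∂ν := by
        simp_rw [mixedExtremizer, ← mul_assoc]
        exact lintegral_mono fun b => lintegral_mul_const_le _ _
    _ = ∫⁻ z, F z * mixedExtremizer μ ν p q θ F z ∂(ν.prod μ) :=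
        (lintegral_prod (fun z => F z * mixedExtremizer μ ν p q θ F z)
          (hF.mul (measurable_mixedExtremizer hF θ)).aemeasurable).symm

theorem mixedNorm_le_of_forall_lintegral_mul_le_of_bounded [SFinite μ] [SFinite ν]
    [p.HolderConjugate p'] [q.HolderConjugate q'] (hF : Measurable F) {s : Set α} {t : Set β}
    (hs : MeasurableSet s) (ht : MeasurableSet t) (hμs : μ s ≠ ∞) (hνt : ν t ≠ ∞) {c : ℝ≥0∞}
    (hc : c ≠ ∞) (hle : ∀ z, F z ≤ c) (hsupp : Function.support F ⊆ t ×ˢ s) {C : ℝ≥0∞}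
    (h : ∀ v, Measurable v → ∫⁻ z, F z * v z ∂(ν.prod μ) ≤ C * mixedNorm μ ν p q v) :
    mixedNorm μ ν p' q' F ≤ C := by
  have hp' := HolderConjugate.ne_zero p' p
  have hq' := HolderConjugate.ne_zero q' q
  have inner_support (b : β) : Function.support (fun a => F (b, a)) ⊆ s := fun a ha => (hsupp ha).2
  have outer_support : Function.support (fun b => lqNorm μ p' fun a => F (b, a)) ⊆ t :=
    Function.support_subset_iff'.2 fun b hb => by
      simp_rw [show ∀ a, F (b, a) = 0 from fun _ =>
        Function.notMem_support.1 fun h => hb (hsupp h).1, lqNorm_zero hp']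
  have inner_le (b : β) : lqNorm μ p' (fun a => F (b, a)) ≤ lqNorm μ p' (s.indicator fun _ => c) :=
    lqNorm_mono fun a => Set.le_indicator_apply (fun _ => hle _)
      fun ha => (Function.notMem_support.1 fun h => ha (inner_support b h)).le
  have bound_ne_top : lqNorm μ p' (s.indicator fun _ => c) ≠ ∞ :=
    lqNorm_ne_top_of_le_of_support_subset hp' hs hμs hc
      (Set.indicator_le' (fun _ _ => le_rfl) fun _ _ => zero_le) Set.support_indicator_subset
  have norm_ne_top : mixedNorm μ ν p' q' F ≠ ∞ :=
    lqNorm_ne_top_of_le_of_support_subset hq' ht hνt bound_ne_top inner_le outer_support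
  have mul_mul_le {θ : ℝ≥0∞} (hθ : θ < 1) : θ * (θ * mixedNorm μ ν p' q' F) ≤ C :=
    calc θ * (θ * mixedNorm μ ν p' q' F)
      _ ≤ ∫⁻ z, F z * mixedExtremizer μ ν p' q' θ F z ∂(ν.prod μ) :=
          mul_mixedNorm_le_lintegral_mul_mixedExtremizer (HolderConjugate.one_le p' p)
            (HolderConjugate.one_le q' q) hF hθ norm_ne_top
            (fun b => ne_top_of_le_ne_top bound_ne_top (inner_le b))
            (measure_ne_top_of_subset outer_support hνt)
            (fun b => measure_ne_top_of_subset (inner_support b) hμs)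
      _ ≤ C * mixedNorm μ ν p q (mixedExtremizer μ ν p' q' θ F) :=
          h _ (measurable_mixedExtremizer hF θ)
      _ ≤ C := mul_le_of_le_one_right' (mixedNorm_mixedExtremizer_le_one hF θ)
  exact ENNReal.le_of_forall_lt_one_mul_le fun θ₁ hθ₁ =>
    ENNReal.le_of_forall_lt_one_mul_le fun θ₂ hθ₂ =>
      (mul_le_mul' (le_max_right θ₁ θ₂) (mul_le_mul_left (le_max_left θ₁ θ₂) _)).trans
        (mul_mul_le (max_lt hθ₁ hθ₂))

theorem mixedNorm_le_of_forall_lintegral_mul_le [SigmaFinite μ] [SigmaFinite ν]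
    [p.HolderConjugate p'] [q.HolderConjugate q'] (hF : Measurable F) {C : ℝ≥0∞}
    (h : ∀ v, Measurable v → ∫⁻ z, F z * v z ∂(ν.prod μ) ≤ C * mixedNorm μ ν p q v) :
    mixedNorm μ ν p' q' F ≤ C := by
  set K : ℕ → Set (β × α) := fun n => spanningSets ν n ×ˢ spanningSets μ n with hK_def
  have hK : Monotone K := fun m n hmn =>
    Set.prod_mono (monotone_spanningSets ν hmn) (monotone_spanningSets μ hmn)
  have hK_meas (n : ℕ) : MeasurableSet (K n) :=
    (measurableSet_spanningSets ν n).prod (measurableSet_spanningSets μ n)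
  have hK_univ : ⋃ n, K n = Set.univ := by
    rw [hK_def, Set.iUnion_prod_of_monotone (monotone_spanningSets ν) (monotone_spanningSets μ),
      iUnion_spanningSets, iUnion_spanningSets, Set.univ_prod_univ]
  have mixedNorm_truncation_le (n : ℕ) : mixedNorm μ ν p' q' (truncation K F n) ≤ C :=
    mixedNorm_le_of_forall_lintegral_mul_le_of_bounded (p := p) (q := q)
      (measurable_truncation hK_meas hF n)
      (measurableSet_spanningSets μ n) (measurableSet_spanningSets ν n)
      (measure_spanningSets_lt_top μ n).ne (measure_spanningSets_lt_top ν n).ne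
      (natCast_ne_top n) (truncation_le_natCast n) (support_truncation_subset n) fun v hv =>
        (lintegral_mono fun z => mul_le_mul_left (truncation_le n z) _).trans (h v hv)
  calc mixedNorm μ ν p' q' F
    _ = mixedNorm μ ν p' q' fun z => ⨆ n, truncation K F n z := by
        simp_rw [iSup_truncation hK hK_univ]
    _ ≤ ⨆ n, mixedNorm μ ν p' q' (truncation K F n) :=
        mixedNorm_iSup_le (HolderConjugate.ne_zero p' p) (HolderConjugate.ne_zero q' q)
          (measurable_truncation hK_meas hF) (monotone_truncation hK)
    _ ≤ C := iSup_le mixedNorm_truncation_le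

theorem mixedNorm_le_of_forall_hasCompactSupport_lintegral_mul_le
    [TopologicalSpace α] [TopologicalSpace β] [SigmaCompactSpace α] [SigmaCompactSpace β]
    [T2Space α] [T2Space β] [OpensMeasurableSpace (β × α)] [SigmaFinite μ] [SigmaFinite ν]
    [p.HolderConjugate p'] [q.HolderConjugate q'] (hF : Measurable F) {C : ℝ≥0∞}
    (h : ∀ v : β × α → ℝ≥0, Measurable v → HasCompactSupport v → BddAbove (Set.range v) →
      ∫⁻ z, F z * v z ∂(ν.prod μ) ≤ C * mixedNorm μ ν p q fun z => v z) :
    mixedNorm μ ν p' q' F ≤ C := by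
  refine mixedNorm_le_of_forall_lintegral_mul_le (p := p) (q := q) hF fun v hv => ?_
  have hK : Monotone (compactCovering (β × α)) := fun m n hmn => compactCovering_subset _ hmn
  have measurable_trunc := measurable_truncation
    (fun n => (isCompact_compactCovering (β × α) n).measurableSet) hv
  have trunc_eq (n : ℕ) (z : β × α) : ((truncation (compactCovering _) v n z).toNNReal : ℝ≥0∞) =
      truncation (compactCovering _) v n z :=
    ENNReal.coe_toNNReal (ne_top_of_le_ne_top (natCast_ne_top n) (truncation_le_natCast n z))
  have pairing_le (n : ℕ) : ∫⁻ z, F z * truncation (compactCovering _) v n z ∂(ν.prod μ) ≤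
      C * mixedNorm μ ν p q (truncation (compactCovering _) v n) := by
    simpa only [trunc_eq] using h (fun z => (truncation (compactCovering _) v n z).toNNReal)
      (measurable_trunc n).ennreal_toNNReal
      (.of_support_subset_isCompact (isCompact_compactCovering _ n) fun z hz =>
        support_truncation_subset n (f := v) fun h₀ => hz (by simp [h₀]))
      ⟨n, Set.forall_mem_range.2 fun z =>
        ENNReal.coe_le_coe.1 ((trunc_eq n z).trans_le (truncation_le_natCast n z))⟩
  calc ∫⁻ z, F z * v z ∂(ν.prod μ)
    _ = ∫⁻ z, ⨆ n, F z * truncation (compactCovering _) v n z ∂(ν.prod μ) := by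
        simp_rw [← ENNReal.mul_iSup, iSup_truncation hK (iUnion_compactCovering _)]
    _ = ⨆ n, ∫⁻ z, F z * truncation (compactCovering _) v n z ∂(ν.prod μ) :=
        lintegral_iSup (fun n => hF.mul (measurable_trunc n))
          fun m n hmn z => mul_le_mul_right (monotone_truncation hK hmn z) _
    _ ≤ C * mixedNorm μ ν p q v := iSup_le fun n => (pairing_le n).trans <| by
        gcongr
        exact mixedNorm_mono (truncation_le n)

theorem mixedNorm_lintegral_le [SigmaFinite μ] [SigmaFinite ν] [p.HolderConjugate p']
    [q.HolderConjugate q'] {τ : Measure γ} [SFinite τ] {H : (β × α) × γ → ℝ≥0∞}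
    (hH : Measurable H) :
    mixedNorm μ ν p q (fun z => ∫⁻ w, H (z, w) ∂τ) ≤
      ∫⁻ w, mixedNorm μ ν p q (fun z => H (z, w)) ∂τ := by
  refine mixedNorm_le_of_forall_lintegral_mul_le (p := p') (q := q')
    hH.lintegral_prod_right' fun v hv => ?_
  calc ∫⁻ z, (∫⁻ w, H (z, w) ∂τ) * v z ∂(ν.prod μ)
    _ = ∫⁻ z, ∫⁻ w, H (z, w) * v z ∂τ ∂(ν.prod μ) :=
        lintegral_congr fun z => (lintegral_mul_const _ (hH.comp measurable_prodMk_left)).symm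
    _ = ∫⁻ w, ∫⁻ z, H (z, w) * v z ∂(ν.prod μ) ∂τ :=
        lintegral_lintegral_swap (hH.mul (hv.comp measurable_fst)).aemeasurable
    _ ≤ ∫⁻ w, mixedNorm μ ν p q (fun z => H (z, w)) * mixedNorm μ ν p' q' v ∂τ :=
        lintegral_mono fun w => lintegral_mul_le_mixedNorm_mul_mixedNorm
          (hH.comp measurable_prodMk_right) hv
    _ = (∫⁻ w, mixedNorm μ ν p q (fun z => H (z, w)) ∂τ) * mixedNorm μ ν p' q' v :=
        lintegral_mul_const _ (measurable_mixedNorm_prodMk_right hH)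

end MixedNorm

theorem isNegInvariant_prod {α β : Type*} [MeasurableSpace α] [MeasurableSpace β] [InvolutiveNeg α]
    [InvolutiveNeg β] [MeasurableNeg α] [MeasurableNeg β] {μ : Measure α} {ν : Measure β}
    [SFinite μ] [SFinite ν] [μ.IsNegInvariant] [ν.IsNegInvariant] :
    (ν.prod μ).IsNegInvariant :=
  ⟨((Measure.measurePreserving_neg ν).prod (Measure.measurePreserving_neg μ)).map_eq⟩

section Young

variable {α β : Type*} [MeasurableSpace α] [MeasurableSpace β] [AddGroup α] [AddGroup β]
  {μ : Measure α} {ν : Measure β} [μ.IsAddLeftInvariant] [ν.IsAddLeftInvariant]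
  {p p' q q' : ℝ≥0∞}

theorem mixedNorm_comp_add_left [MeasurableAdd α] [MeasurableAdd β] (F : β × α → ℝ≥0∞)
    (w : β × α) : mixedNorm μ ν p q (fun z => F (w + z)) = mixedNorm μ ν p q F :=
  calc mixedNorm μ ν p q (fun z => F (w + z))
    _ = lqNorm ν q fun b => lqNorm μ p fun a => F (w.1 + b, a) :=
        congrArg (lqNorm ν q) <| funext fun b => lqNorm_comp_measurePreserving
          (e := MeasurableEquiv.addLeft w.2) (f := fun a => F (w.1 + b, a))
          (measurePreserving_add_left μ w.2)
    _ = mixedNorm μ ν p q F := lqNorm_comp_measurePreserving (e := MeasurableEquiv.addLeft w.1)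
        (f := fun b => lqNorm μ p fun a => F (b, a)) (measurePreserving_add_left ν w.1)

theorem mixedNorm_lconvolution_le [MeasurableAdd₂ α] [MeasurableAdd₂ β] [MeasurableNeg α]
    [MeasurableNeg β] [SigmaFinite μ] [SigmaFinite ν] [p.HolderConjugate p']
    [q.HolderConjugate q'] {Γ F : β × α → ℝ≥0∞} (hΓ : Measurable Γ) (hF : Measurable F) :
    mixedNorm μ ν p q (Γ ⋆ₗ[ν.prod μ] F) ≤ (∫⁻ w, Γ w ∂(ν.prod μ)) * mixedNorm μ ν p q F := by
  have measurable_comp_neg_add : Measurable fun y : (β × α) × β × α => F (-y.2 + y.1) :=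
    hF.comp (g := F) (f := fun y : (β × α) × β × α => (-y.2.1 + y.1.1, -y.2.2 + y.1.2))
      (by fun_prop)
  have mixedNorm_translate_le (w : β × α) :
      mixedNorm μ ν p q (fun z => Γ w * F (-w + z)) ≤ Γ w * mixedNorm μ ν p q F := by
    simp_rw [mul_comm (Γ w)]
    rw [← mixedNorm_comp_add_left F (-w)]
    exact mixedNorm_mul_const_le (HolderConjugate.ne_zero p p') (HolderConjugate.ne_zero q q')
      (measurable_comp_neg_add.comp measurable_prodMk_right) (Γ w)
  calc mixedNorm μ ν p q (Γ ⋆ₗ[ν.prod μ] F)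
    _ ≤ ∫⁻ w, mixedNorm μ ν p q (fun z => Γ w * F (-w + z)) ∂(ν.prod μ) :=
        mixedNorm_lintegral_le (p' := p') (q' := q')
          (H := fun y : (β × α) × β × α => Γ y.2 * F (-y.2 + y.1))
          ((hΓ.comp measurable_snd).mul measurable_comp_neg_add)
    _ ≤ ∫⁻ w, Γ w * mixedNorm μ ν p q F ∂(ν.prod μ) := lintegral_mono mixedNorm_translate_le
    _ = (∫⁻ w, Γ w ∂(ν.prod μ)) * mixedNorm μ ν p q F := lintegral_mul_const _ hΓ

end Young

section SchwartzExp

variable {V : Type*} [NormedAddCommGroup V] [NormedSpace ℝ V]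

theorem norm_iteratedFDeriv_real_cexp (n : ℕ) (z : ℂ) :
    ‖iteratedFDeriv ℝ n cexp z‖ = ‖cexp z‖ := by
  rw [← (contDiff_exp (𝕜 := ℂ)).contDiffAt.restrictScalars_iteratedFDeriv (𝕜 := ℝ),
    Function.comp_apply, ContinuousMultilinearMap.norm_restrictScalars,
    norm_iteratedFDeriv_eq_norm_iteratedDeriv, iteratedDeriv_eq_iterate, iter_deriv_exp]

theorem one_add_pow_mul_exp_neg_mul_sq_le {c : ℝ} (hc : 0 < c) (m : ℕ) {x : ℝ} (hx : 0 ≤ x) :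
    (1 + x) ^ m * Real.exp (-(c * x ^ 2)) ≤ m.factorial / c ^ m * Real.exp (2 * c) := by
  have pow_le : (1 + x) ^ m ≤ m.factorial / c ^ m * Real.exp (c * (1 + x)) := by
    have h := Real.pow_div_factorial_le_exp (c * (1 + x)) (by positivity) m
    rw [div_le_iff₀ (by positivity), mul_pow] at h
    rw [div_mul_eq_mul_div, le_div_iff₀ (by positivity)]
    linarith
  calc (1 + x) ^ m * Real.exp (-(c * x ^ 2))
    _ ≤ m.factorial / c ^ m * Real.exp (c * (1 + x)) * Real.exp (-(c * x ^ 2)) := by gcongr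
    _ = m.factorial / c ^ m * Real.exp (c * (1 + x) + -(c * x ^ 2)) := by
        rw [mul_assoc, ← Real.exp_add]
    _ ≤ m.factorial / c ^ m * Real.exp (2 * c) := by
        gcongr
        nlinarith [mul_nonneg hc.le (sq_nonneg (x - 1)), mul_nonneg hc.le hx]

theorem exists_norm_iteratedFDeriv_cexp_comp_le {Q : V → ℂ} (hQ : Q.HasTemperateGrowth) (n : ℕ) :
    ∃ (m : ℕ) (A : ℝ), 0 ≤ A ∧ ∀ v,
      ‖iteratedFDeriv ℝ n (fun v => cexp (Q v)) v‖ ≤ A * (1 + ‖v‖) ^ m * Real.exp (Q v).re := by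
  obtain ⟨k, B, hB, norm_le⟩ := hQ.norm_iteratedFDeriv_le_uniform n
  refine ⟨k * n, n.factorial * (1 + B) ^ n, by positivity, fun v => ?_⟩
  set D := (1 + B) * (1 + ‖v‖) ^ k with hD
  have one_le_pow : 1 ≤ (1 + ‖v‖) ^ k := one_le_pow₀ (by linarith [norm_nonneg v])
  have one_le_D : 1 ≤ D := by nlinarith
  have norm_iteratedFDeriv_le (i : ℕ) (hi : 1 ≤ i) (hin : i ≤ n) :
      ‖iteratedFDeriv ℝ i Q v‖ ≤ D ^ i :=
    calc ‖iteratedFDeriv ℝ i Q v‖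
      _ ≤ B * (1 + ‖v‖) ^ k := norm_le i hin v
      _ ≤ D := by rw [hD]; gcongr; linarith
      _ ≤ D ^ i := le_self_pow₀ one_le_D (by lia)
  calc ‖iteratedFDeriv ℝ n (fun v => cexp (Q v)) v‖
    _ ≤ n.factorial * ‖cexp (Q v)‖ * D ^ n :=
        norm_iteratedFDeriv_comp_le contDiff_exp hQ.1 (by exact_mod_cast le_top) v
          (fun i _ => (norm_iteratedFDeriv_real_cexp i (Q v)).le) norm_iteratedFDeriv_le
    _ = n.factorial * (1 + B) ^ n * (1 + ‖v‖) ^ (k * n) * Real.exp (Q v).re := by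
        rw [norm_exp, hD, mul_pow, ← pow_mul]
        ring

theorem exists_schwartzMap_eq_cexp {Q : V → ℂ} (hQ : Q.HasTemperateGrowth) {c C : ℝ} (hc : 0 < c)
    (hre : ∀ v, (Q v).re ≤ C - c * ‖v‖ ^ 2) : ∃ S : 𝓢(V, ℂ), ∀ v, S v = cexp (Q v) := by
  refine ⟨⟨fun v => cexp (Q v), hQ.1.cexp, fun k n => ?_⟩, fun v => rfl⟩
  obtain ⟨m, A, hA, norm_le⟩ := exists_norm_iteratedFDeriv_cexp_comp_le hQ n
  refine ⟨A * Real.exp C * ((k + m).factorial / c ^ (k + m) * Real.exp (2 * c)), fun v => ?_⟩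
  calc ‖v‖ ^ k * ‖iteratedFDeriv ℝ n (fun v => cexp (Q v)) v‖
    _ ≤ (1 + ‖v‖) ^ k * (A * (1 + ‖v‖) ^ m * Real.exp (C - c * ‖v‖ ^ 2)) := by
        gcongr
        · exact le_add_of_nonneg_left zero_le_one
        · exact (norm_le v).trans (by gcongr; exact hre v)
    _ = A * Real.exp C * ((1 + ‖v‖) ^ (k + m) * Real.exp (-(c * ‖v‖ ^ 2))) := by
        rw [sub_eq_add_neg, Real.exp_add]
        ring
    _ ≤ A * Real.exp C * ((k + m).factorial / c ^ (k + m) * Real.exp (2 * c)) := by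
        have := one_add_pow_mul_exp_neg_mul_sq_le hc (k + m) (norm_nonneg v)
        gcongr A * Real.exp C * ?_

end SchwartzExp

section SchwartzIntegral

variable {Z E F : Type*} [NormedAddCommGroup Z] [NormedSpace ℝ Z] [NormedAddCommGroup E]
  [NormedSpace ℝ E] [NormedAddCommGroup F] [NormedSpace ℂ F]

/-- The derivative of a Schwartz function on a product with respect to the second variable. -/
noncomputable def schwartzFDerivSnd (S : 𝓢(Z × E, F)) : 𝓢(Z × E, E →L[ℝ] F) :=
  (S.fderivCLM ℝ (Z × E) F).postcompCLM
    ((ContinuousLinearMap.compL ℝ E (Z × E) F).flip (ContinuousLinearMap.inr ℝ Z E))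

theorem hasFDerivAt_schwartzFDerivSnd (S : 𝓢(Z × E, F)) (z : Z) (t : E) :
    HasFDerivAt (fun t => S (z, t)) (schwartzFDerivSnd S (z, t)) t :=
  (S.hasFDerivAt (z, t)).comp t (hasFDerivAt_prodMk_right z t)

variable [MeasurableSpace Z] [BorelSpace Z] [SecondCountableTopology Z] {μ : Measure Z} {Ψ : Z → ℂ}

theorem integrable_smul_schwartz (hΨ : Integrable Ψ μ) (S : 𝓢(Z × E, F)) (t : E) :
    Integrable (fun z => Ψ z • S (z, t)) μ :=
  hΨ.smul_bdd (SchwartzMap.seminorm ℝ 0 0 S)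
    (S.continuous.comp (by fun_prop)).aestronglyMeasurable
    (.of_forall fun z => S.norm_le_seminorm ℝ (z, t))

theorem hasFDerivAt_integral_smul_schwartz [CompleteSpace F] (hΨ : Integrable Ψ μ)
    (S : 𝓢(Z × E, F)) (t : E) :
    HasFDerivAt (fun t => ∫ z, Ψ z • S (z, t) ∂μ)
      (∫ z, Ψ z • schwartzFDerivSnd S (z, t) ∂μ) t :=
  hasFDerivAt_integral_of_dominated_of_fderiv_le Filter.univ_mem
    (bound := fun z => ‖Ψ z‖ * SchwartzMap.seminorm ℝ 0 0 (schwartzFDerivSnd S))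
    (.of_forall fun t => (integrable_smul_schwartz hΨ S t).aestronglyMeasurable)
    (integrable_smul_schwartz hΨ S t)
    (integrable_smul_schwartz hΨ (schwartzFDerivSnd S) t).aestronglyMeasurable
    (.of_forall fun _ _ _ => (norm_smul_le _ _).trans <|
      mul_le_mul_of_nonneg_left ((schwartzFDerivSnd S).norm_le_seminorm ℝ _) (norm_nonneg _))
    (hΨ.norm.mul_const _)
    (.of_forall fun z t _ => (hasFDerivAt_schwartzFDerivSnd S z t).const_smul (Ψ z))

theorem exists_iteratedFDeriv_integral_smul_schwartz_eq [CompleteSpace F] (hΨ : Integrable Ψ μ)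
    (S : 𝓢(Z × E, F)) (n : ℕ) : ∃ T : 𝓢(Z × E, E [×n]→L[ℝ] F),
      iteratedFDeriv ℝ n (fun t => ∫ z, Ψ z • S (z, t) ∂μ) = fun t => ∫ z, Ψ z • T (z, t) ∂μ := by
  induction n with
  | zero =>
    let e := (continuousMultilinearCurryFin0 ℝ E F).symm.toContinuousLinearEquiv
    refine ⟨S.postcompCLM e.toContinuousLinearMap, funext fun t => ?_⟩
    rw [iteratedFDeriv_zero_eq_comp]
    exact (e.integral_comp_comm _).symm
  | succ n ih =>
    obtain ⟨T, hT⟩ := ih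
    let e := (continuousMultilinearCurryLeftEquiv ℝ (fun _ : Fin (n + 1) => E) F).symm
      |>.toContinuousLinearEquiv
    refine ⟨(schwartzFDerivSnd T).postcompCLM e.toContinuousLinearMap, funext fun t => ?_⟩
    rw [iteratedFDeriv_succ_eq_comp_left, hT, Function.comp_apply,
      (hasFDerivAt_integral_smul_schwartz hΨ T t).fderiv]
    exact (e.integral_comp_comm (μ := μ) fun z => Ψ z • schwartzFDerivSnd T (z, t)).symm

theorem norm_pow_mul_norm_integral_smul_schwartz_le (hΨ : Integrable Ψ μ) (S : 𝓢(Z × E, F))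
    (k : ℕ) (t : E) :
    ‖t‖ ^ k * ‖∫ z, Ψ z • S (z, t) ∂μ‖ ≤ (∫ z, ‖Ψ z‖ ∂μ) * SchwartzMap.seminorm ℝ k 0 S := by
  have norm_le (z : Z) : ‖t‖ ^ k * ‖Ψ z • S (z, t)‖ ≤ ‖Ψ z‖ * SchwartzMap.seminorm ℝ k 0 S :=
    calc ‖t‖ ^ k * ‖Ψ z • S (z, t)‖
      _ = ‖Ψ z‖ * (‖t‖ ^ k * ‖S (z, t)‖) := by rw [norm_smul]; ring
      _ ≤ ‖Ψ z‖ * (‖(z, t)‖ ^ k * ‖S (z, t)‖) := by gcongr; exact norm_snd_le (z, t)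
      _ ≤ ‖Ψ z‖ * SchwartzMap.seminorm ℝ k 0 S := by
          gcongr
          exact S.norm_pow_mul_le_seminorm ℝ k (z, t)
  calc ‖t‖ ^ k * ‖∫ z, Ψ z • S (z, t) ∂μ‖
    _ ≤ ‖t‖ ^ k * ∫ z, ‖Ψ z • S (z, t)‖ ∂μ := by gcongr; exact norm_integral_le_integral_norm _
    _ = ∫ z, ‖t‖ ^ k * ‖Ψ z • S (z, t)‖ ∂μ := (integral_const_mul _ _).symm
    _ ≤ ∫ z, ‖Ψ z‖ * SchwartzMap.seminorm ℝ k 0 S ∂μ :=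
        integral_mono ((integrable_smul_schwartz hΨ S t).norm.const_mul _) (hΨ.norm.mul_const _)
          norm_le
    _ = (∫ z, ‖Ψ z‖ ∂μ) * SchwartzMap.seminorm ℝ k 0 S := integral_mul_const _ _

theorem exists_schwartzMap_eq_integral_smul [CompleteSpace F] (hΨ : Integrable Ψ μ)
    (S : 𝓢(Z × E, F)) : ∃ g : 𝓢(E, F), ∀ t, g t = ∫ z, Ψ z • S (z, t) ∂μ := by
  refine ⟨⟨fun t => ∫ z, Ψ z • S (z, t) ∂μ, ?_, fun k n => ?_⟩, fun t => rfl⟩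
  · refine contDiff_of_differentiable_iteratedFDeriv fun n _ => ?_
    obtain ⟨T, hT⟩ := exists_iteratedFDeriv_integral_smul_schwartz_eq hΨ S n
    exact hT ▸ fun t => (hasFDerivAt_integral_smul_schwartz hΨ T t).differentiableAt
  · obtain ⟨T, hT⟩ := exists_iteratedFDeriv_integral_smul_schwartz_eq hΨ S n
    exact ⟨_, fun t => (congrFun hT t).symm ▸ norm_pow_mul_norm_integral_smul_schwartz_le hΨ T k t⟩

end SchwartzIntegral

section CoherentState

variable {ι : Type*} [Fintype ι]

theorem norm_cexp_I_mul_two_pi_mul (a : ℝ) : ‖cexp (I * (2 * Real.pi * a))‖ = 1 := by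
  exact_mod_cast norm_exp_I_mul_ofReal (2 * Real.pi * a)

theorem conj_cexp_I_mul_two_pi_mul (a : ℝ) :
    starRingEnd ℂ (cexp (I * (2 * Real.pi * a))) = cexp (I * -(2 * Real.pi * a)) := by
  rw [← exp_conj]
  simp [map_ofNat]

theorem gaussWin_eq_ofReal (t : EuclideanSpace ℝ ι) :
    gaussWin t = (Real.exp (-(Real.pi * ‖t‖ ^ 2)) : ℝ) := by
  simp [gaussWin]

theorem conj_gaussWin (t : EuclideanSpace ℝ ι) : starRingEnd ℂ (gaussWin t) = gaussWin t := by
  rw [gaussWin_eq_ofReal, conj_ofReal]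

theorem norm_gaussWin_le_one (t : EuclideanSpace ℝ ι) : ‖gaussWin t‖ ≤ 1 := by
  rw [gaussWin_eq_ofReal, norm_real, Real.norm_of_nonneg (Real.exp_nonneg _), Real.exp_le_one_iff,
    neg_nonpos]
  positivity

theorem exists_schwartzMap_eq_gaussWin :
    ∃ S : 𝓢(EuclideanSpace ℝ ι, ℂ), ∀ t, S t = gaussWin t := by
  have gaussWin_eq_cexp (t : EuclideanSpace ℝ ι) :
      gaussWin t = cexp ((-(Real.pi * ‖t‖ ^ 2) : ℝ) : ℂ) := by
    simp [gaussWin]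
  simp_rw [gaussWin_eq_cexp]
  exact exists_schwartzMap_eq_cexp (C := 0) (by fun_prop) Real.pi_pos fun t => by
    rw [ofReal_re, zero_sub]

theorem hasTemperateGrowth_gaussWin :
    (gaussWin : EuclideanSpace ℝ ι → ℂ).HasTemperateGrowth := by
  obtain ⟨S, hS⟩ := exists_schwartzMap_eq_gaussWin (ι := ι)
  exact funext hS ▸ S.hasTemperateGrowth

@[fun_prop]
theorem continuous_gaussWin : Continuous (gaussWin : EuclideanSpace ℝ ι → ℂ) :=
  hasTemperateGrowth_gaussWin.1.continuous

theorem integrable_gaussWin : Integrable (gaussWin : EuclideanSpace ℝ ι → ℂ) := by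
  obtain ⟨S, hS⟩ := exists_schwartzMap_eq_gaussWin (ι := ι)
  exact funext hS ▸ S.integrable

variable (ι) in
/-- The time-frequency plane, as pairs `(ω, x)` of a frequency and a position: the frequency comes
first because it is the outer variable of the modulation space norm. -/
abbrev PhaseSpace : Type _ := EuclideanSpace ℝ ι × EuclideanSpace ℝ ι

/-- The Gaussian wave packet centred at `(ω, x)`, that is, the time-frequency shift
`e^{2πi ω⬝t} G (t - x)` of the Gaussian window. -/
noncomputable def coherentState (z : PhaseSpace ι) (t : EuclideanSpace ℝ ι) : ℂ :=
  gaussWin (t - z.2) * cexp (I * (2 * Real.pi * inner ℝ z.1 t))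

theorem norm_coherentState (z : PhaseSpace ι) (t : EuclideanSpace ℝ ι) :
    ‖coherentState z t‖ = ‖gaussWin (t - z.2)‖ := by
  rw [coherentState, norm_mul, norm_cexp_I_mul_two_pi_mul, mul_one]

theorem norm_coherentState_le_one (z : PhaseSpace ι) (t : EuclideanSpace ℝ ι) :
    ‖coherentState z t‖ ≤ 1 :=
  (norm_coherentState z t).trans_le (norm_gaussWin_le_one _)

@[fun_prop]
theorem continuous_coherentState :
    Continuous fun v : PhaseSpace ι × EuclideanSpace ℝ ι => coherentState v.1 v.2 := by
  unfold coherentState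
  fun_prop

theorem integrable_coherentState (z : PhaseSpace ι) : Integrable (coherentState z) := by
  refine (integrable_gaussWin.comp_sub_right z.2).norm.mono' ?_
    (.of_forall fun t => (norm_coherentState z t).le)
  exact (continuous_coherentState.comp (.prodMk_right z)).aestronglyMeasurable

theorem integral_norm_coherentState (z : PhaseSpace ι) :
    ∫ t, ‖coherentState z t‖ = ∫ t : EuclideanSpace ℝ ι, ‖gaussWin t‖ := by
  simp_rw [norm_coherentState]
  exact integral_sub_right_eq_self (fun t => ‖gaussWin t‖) z.2

theorem STFT_eq_integral_mul_conj_coherentState (F : EuclideanSpace ℝ ι → ℂ)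
    (x ω : EuclideanSpace ℝ ι) :
    STFT F x ω = ∫ t, F t * starRingEnd ℂ (coherentState (ω, x) t) := by
  simp_rw [STFT, coherentState, map_mul, conj_cexp_I_mul_two_pi_mul, mul_assoc]

theorem measurable_STFT {F : EuclideanSpace ℝ ι → ℂ} (hF : Measurable F) :
    Measurable fun z : PhaseSpace ι => STFT F z.2 z.1 := by
  simp_rw [STFT_eq_integral_mul_conj_coherentState]
  have measurable_integrand : Measurable fun v : PhaseSpace ι × EuclideanSpace ℝ ι =>
      F v.2 * starRingEnd ℂ (coherentState v.1 v.2) :=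
    (hF.comp measurable_snd).mul
      (continuous_conj.comp continuous_coherentState).measurable
  exact (measurable_integrand.stronglyMeasurable.integral_prod_right' (ν := volume)).measurable

theorem norm_STFT_le {F : EuclideanSpace ℝ ι → ℂ} {M : ℝ} (hM : ∀ t, ‖F t‖ ≤ M)
    (x ω : EuclideanSpace ℝ ι) : ‖STFT F x ω‖ ≤ M * ∫ t : EuclideanSpace ℝ ι, ‖gaussWin t‖ := by
  rw [STFT_eq_integral_mul_conj_coherentState, ← integral_norm_coherentState (ω, x),
    ← integral_const_mul]
  refine norm_integral_le_of_norm_le ((integrable_coherentState _).norm.const_mul M)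
    (.of_forall fun t => ?_)
  rw [norm_mul, RCLike.norm_conj]
  gcongr
  exact hM t

theorem modNorm_eq_mixedNorm (p q : ℝ≥0∞) (F : EuclideanSpace ℝ ι → ℂ) :
    modNorm p q F = mixedNorm volume volume p q fun z : PhaseSpace ι => ‖STFT F z.2 z.1‖ₑ :=
  rfl

theorem STFT_conj (F : EuclideanSpace ℝ ι → ℂ) (x ω : EuclideanSpace ℝ ι) :
    STFT (fun t => starRingEnd ℂ (F t)) x ω = starRingEnd ℂ (STFT F x (-ω)) := by
  have conj_coherentState (t : EuclideanSpace ℝ ι) :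
      starRingEnd ℂ (coherentState (ω, x) t) = coherentState (-ω, x) t := by
    simp [coherentState, conj_gaussWin, conj_cexp_I_mul_two_pi_mul]
  simp_rw [STFT_eq_integral_mul_conj_coherentState, ← integral_conj, map_mul, conj_conj,
    conj_coherentState]

theorem modNorm_conj (p q : ℝ≥0∞) (F : EuclideanSpace ℝ ι → ℂ) :
    modNorm p q (fun t => starRingEnd ℂ (F t)) = modNorm p q F := by
  simp_rw [modNorm, STFT_conj, RCLike.nnnorm_conj]
  exact lqNorm_comp_measurePreserving (e := MeasurableEquiv.neg (EuclideanSpace ℝ ι))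
    (f := fun ω => lqNorm volume p fun x => (‖STFT F x ω‖₊ : ℝ≥0∞))
    (Measure.measurePreserving_neg volume)

end CoherentState

section GaussianAmbiguity

variable {ι : Type*} [Fintype ι]

theorem gaussWin_add_half_mul_gaussWin_sub_half (t x : EuclideanSpace ℝ ι) :
    gaussWin (t + (2 : ℝ)⁻¹ • x) * gaussWin (t - (2 : ℝ)⁻¹ • x) =
      cexp (-(Real.pi / 2 * ‖x‖ ^ 2 : ℝ)) * cexp (-(2 * Real.pi : ℝ) * ‖t‖ ^ 2) := by
  have parallelogram : ‖t + (2 : ℝ)⁻¹ • x‖ ^ 2 + ‖t - (2 : ℝ)⁻¹ • x‖ ^ 2 =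
      2 * ‖t‖ ^ 2 + 2⁻¹ * ‖x‖ ^ 2 := by
    rw [norm_add_sq_real, norm_sub_sq_real, norm_smul, Real.norm_of_nonneg (by norm_num)]
    ring
  rw [gaussWin_eq_ofReal, gaussWin_eq_ofReal]
  norm_cast
  rw [← Real.exp_add, ← Real.exp_add]
  congr 1
  linear_combination -Real.pi * parallelogram

theorem STFT_gaussWin (x ω : EuclideanSpace ℝ ι) :
    STFT gaussWin x ω = cexp (I * -(2 * Real.pi * inner ℝ ω ((2 : ℝ)⁻¹ • x))) *
      cexp (-(Real.pi / 2 * ‖x‖ ^ 2 : ℝ)) *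
      ((Real.pi / (2 * Real.pi : ℝ)) ^ (Fintype.card ι / 2 : ℂ) *
        cexp ((-(2 * Real.pi * I)) ^ 2 * ‖ω‖ ^ 2 / (4 * (2 * Real.pi : ℝ)))) := by
  have integrand_shift (t : EuclideanSpace ℝ ι) :
      gaussWin (t + (2 : ℝ)⁻¹ • x) * starRingEnd ℂ (gaussWin (t + (2 : ℝ)⁻¹ • x - x)) *
        cexp (I * -(2 * Real.pi * inner ℝ ω (t + (2 : ℝ)⁻¹ • x))) =
      cexp (I * -(2 * Real.pi * inner ℝ ω ((2 : ℝ)⁻¹ • x))) *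
        cexp (-(Real.pi / 2 * ‖x‖ ^ 2 : ℝ)) *
        cexp (-(2 * Real.pi : ℝ) * ‖t‖ ^ 2 + -(2 * Real.pi * I) * inner ℝ ω t) := by
    rw [show t + (2 : ℝ)⁻¹ • x - x = t - (2 : ℝ)⁻¹ • x by module, conj_gaussWin,
      gaussWin_add_half_mul_gaussWin_sub_half, inner_add_right, Complex.ofReal_add, mul_add,
      neg_add, mul_add, exp_add, exp_add, mul_comm I (-(2 * Real.pi * (inner ℝ ω t : ℂ)))]
    ring_nf
  rw [STFT, ← integral_add_right_eq_self _ ((2 : ℝ)⁻¹ • x)]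
  simp_rw [integrand_shift]
  rw [integral_const_mul, GaussianFourier.integral_cexp_neg_mul_sq_norm_add_of_euclideanSpace
    (by simpa using Real.pi_pos)]

theorem norm_STFT_gaussWin (x ω : EuclideanSpace ℝ ι) :
    ‖STFT gaussWin x ω‖ = 2⁻¹ ^ (Fintype.card ι / 2 : ℝ) *
      (Real.exp (-(Real.pi / 2) * ‖ω‖ ^ 2) * Real.exp (-(Real.pi / 2) * ‖x‖ ^ 2)) := by
  have gaussian_exponent : (-(2 * Real.pi * I)) ^ 2 * (‖ω‖ : ℂ) ^ 2 / (4 * (2 * Real.pi : ℝ)) =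
      (-(Real.pi / 2) * ‖ω‖ ^ 2 : ℝ) := by
    have : (Real.pi : ℂ) ≠ 0 := ofReal_ne_zero.2 Real.pi_ne_zero
    push_cast
    field_simp
    rw [I_sq]
    ring
  have norm_amplitude : ‖((Real.pi : ℂ) / (2 * Real.pi : ℝ)) ^ (Fintype.card ι / 2 : ℂ)‖ =
      2⁻¹ ^ (Fintype.card ι / 2 : ℝ) := by
    rw [← ofReal_div, norm_cpow_eq_rpow_re_of_pos (by positivity)]
    congr 1
    · field_simp
    · rw [div_ofNat_re, natCast_re]
  have norm_phase := norm_cexp_I_mul_two_pi_mul (-inner ℝ ω ((2 : ℝ)⁻¹ • x))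
  rw [ofReal_neg, mul_neg] at norm_phase
  rw [STFT_gaussWin, gaussian_exponent, norm_mul, norm_mul, norm_mul, norm_phase, norm_amplitude,
    ← ofReal_neg, norm_exp_ofReal, norm_exp_ofReal]
  ring_nf

/-- The modulus of the ambiguity function `V_G G` of the Gaussian window. -/
noncomputable def gaussianAmbiguity (w : PhaseSpace ι) : ℝ≥0∞ := ‖STFT gaussWin w.2 w.1‖ₑ

theorem measurable_gaussianAmbiguity : Measurable (gaussianAmbiguity : PhaseSpace ι → ℝ≥0∞) :=
  (measurable_STFT continuous_gaussWin.measurable).enorm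

theorem gaussianAmbiguity_ne_zero (w : PhaseSpace ι) : gaussianAmbiguity w ≠ 0 := by
  rw [gaussianAmbiguity, enorm_ne_zero, ← norm_ne_zero_iff, norm_STFT_gaussWin]
  positivity

theorem lintegral_gaussianAmbiguity_ne_top : ∫⁻ w : PhaseSpace ι, gaussianAmbiguity w ≠ ∞ := by
  have integrable_gaussian :
      Integrable fun t : EuclideanSpace ℝ ι => Real.exp (-(Real.pi / 2) * ‖t‖ ^ 2) := by
    by_contra h
    have integral_gaussian := GaussianFourier.integral_rexp_neg_mul_sq_norm
      (V := EuclideanSpace ℝ ι) Real.pi_div_two_pos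
    rw [integral_undef h] at integral_gaussian
    exact absurd integral_gaussian (by positivity)
  have integrable_norm_STFT : Integrable fun w : PhaseSpace ι => ‖STFT gaussWin w.2 w.1‖ := by
    simp_rw [norm_STFT_gaussWin]
    exact (integrable_gaussian.mul_prod integrable_gaussian).const_mul _
  simpa only [gaussianAmbiguity, enorm_norm] using integrable_norm_STFT.2.ne

theorem enorm_STFT_coherentState (w z : PhaseSpace ι) :
    ‖STFT (coherentState w) z.2 z.1‖ₑ = gaussianAmbiguity (z - w) := by
  have integrand_shift (t : EuclideanSpace ℝ ι) :
      coherentState w (t + w.2) * starRingEnd ℂ (coherentState z (t + w.2)) =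
        cexp (I * (2 * Real.pi * (inner ℝ (w.1 - z.1) w.2 : ℝ))) *
          (gaussWin t * starRingEnd ℂ (coherentState (z - w) t)) := by
    have phase_shift : cexp (I * (2 * Real.pi * inner ℝ w.1 (t + w.2))) *
        cexp (I * -(2 * Real.pi * inner ℝ z.1 (t + w.2))) =
          cexp (I * (2 * Real.pi * (inner ℝ (w.1 - z.1) w.2 : ℝ))) *
            cexp (I * -(2 * Real.pi * (inner ℝ (z.1 - w.1) t : ℝ))) := by
      rw [← exp_add, ← exp_add]
      simp only [inner_sub_left, inner_add_right]
      push_cast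
      ring_nf
    simp only [coherentState, map_mul, conj_gaussWin, conj_cexp_I_mul_two_pi_mul, Prod.fst_sub,
      Prod.snd_sub, add_sub_cancel_right, show t + w.2 - z.2 = t - (z.2 - w.2) by abel]
    linear_combination gaussWin t * gaussWin (t - (z.2 - w.2)) * phase_shift
  rw [gaussianAmbiguity, STFT_eq_integral_mul_conj_coherentState,
    ← integral_add_right_eq_self _ w.2, STFT_eq_integral_mul_conj_coherentState]
  simp_rw [integrand_shift]
  rw [integral_const_mul, enorm_mul, ← ofReal_norm (cexp _), norm_cexp_I_mul_two_pi_mul,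
    ENNReal.ofReal_one, one_mul]

theorem enorm_STFT_coherentState_comm (w z : PhaseSpace ι) :
    ‖STFT (coherentState w) z.2 z.1‖ₑ = ‖STFT (coherentState z) w.2 w.1‖ₑ := by
  rw [← RCLike.enorm_conj (STFT (coherentState z) w.2 w.1)]
  simp_rw [STFT_eq_integral_mul_conj_coherentState, ← integral_conj, map_mul, conj_conj,
    mul_comm (starRingEnd ℂ _)]

end GaussianAmbiguity

section Synthesis

variable {ι : Type*} [Fintype ι] {Ψ : PhaseSpace ι → ℂ} {H : EuclideanSpace ℝ ι → ℂ} {M : ℝ}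

theorem norm_sq_le_two_mul_add_norm_sub_sq (v : PhaseSpace ι × EuclideanSpace ℝ ι) :
    ‖v‖ ^ 2 ≤ 2 * (‖v.1.1‖ ^ 2 + ‖v.1.2‖ ^ 2 + ‖v.2 - v.1.2‖ ^ 2) := by
  have norm_snd_sq_le : ‖v.2‖ ^ 2 ≤ 2 * (‖v.2 - v.1.2‖ ^ 2 + ‖v.1.2‖ ^ 2) :=
    calc ‖v.2‖ ^ 2
      _ ≤ (‖v.2 - v.1.2‖ + ‖v.1.2‖) ^ 2 := by gcongr; exact norm_le_norm_sub_add _ _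
      _ ≤ 2 * (‖v.2 - v.1.2‖ ^ 2 + ‖v.1.2‖ ^ 2) := add_sq_le
  rcases max_choice ‖v.1‖ ‖v.2‖ with h | h
  · rcases max_choice ‖v.1.1‖ ‖v.1.2‖ with h' | h'
    all_goals
      rw [Prod.norm_def, h, Prod.norm_def, h']
      nlinarith [sq_nonneg ‖v.1.1‖, sq_nonneg ‖v.1.2‖, sq_nonneg ‖v.2 - v.1.2‖]
  · rw [Prod.norm_def, h]
    linarith [sq_nonneg ‖v.1.1‖]

theorem exists_schwartzMap_eq_cexp_mul_coherentState :
    ∃ S : 𝓢(PhaseSpace ι × EuclideanSpace ℝ ι, ℂ), ∀ z t,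
      S (z, t) = cexp (-(Real.pi * (‖z.1‖ ^ 2 + ‖z.2‖ ^ 2)) : ℝ) * coherentState z t := by
  let Q (v : PhaseSpace ι × EuclideanSpace ℝ ι) : ℂ :=
    (-(Real.pi * (‖v.1.1‖ ^ 2 + ‖v.1.2‖ ^ 2 + ‖v.2 - v.1.2‖ ^ 2)) : ℝ) +
      (2 * Real.pi * inner ℝ v.1.1 v.2 : ℝ) * I
  have Q_hasTemperateGrowth : Q.HasTemperateGrowth := by
    let frequency : PhaseSpace ι × EuclideanSpace ℝ ι →L[ℝ] EuclideanSpace ℝ ι :=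
      (ContinuousLinearMap.fst ℝ _ _).comp (ContinuousLinearMap.fst ℝ _ _)
    let position : PhaseSpace ι × EuclideanSpace ℝ ι →L[ℝ] EuclideanSpace ℝ ι :=
      (ContinuousLinearMap.snd ℝ _ _).comp (ContinuousLinearMap.fst ℝ _ _)
    let time : PhaseSpace ι × EuclideanSpace ℝ ι →L[ℝ] EuclideanSpace ℝ ι :=
      ContinuousLinearMap.snd ℝ _ _
    have norm_sq_comp (L : PhaseSpace ι × EuclideanSpace ℝ ι →L[ℝ] EuclideanSpace ℝ ι) :
        (fun v => ‖L v‖ ^ 2).HasTemperateGrowth :=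
      (Function.hasTemperateGrowth_norm_sq _).comp L.hasTemperateGrowth
    have norm_sq_time_sub := norm_sq_comp (time - position)
    have inner_frequency_time :
        (fun v => (inner ℝ (frequency v) (time v) : ℝ)).HasTemperateGrowth :=
      (innerSL ℝ).bilinear_hasTemperateGrowth frequency.hasTemperateGrowth time.hasTemperateGrowth
    change Function.HasTemperateGrowth fun v =>
      ((-(Real.pi * (‖frequency v‖ ^ 2 + ‖position v‖ ^ 2 + ‖(time - position) v‖ ^ 2)) : ℝ) : ℂ) +
        (2 * Real.pi * inner ℝ (frequency v) (time v) : ℝ) * I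
    fun_prop
  have re_Q_le (v) : (Q v).re ≤ 0 - Real.pi / 2 * ‖v‖ ^ 2 := by
    rw [add_re, re_ofReal_mul, I_re, mul_zero, add_zero, ofReal_re]
    linarith [mul_le_mul_of_nonneg_left (norm_sq_le_two_mul_add_norm_sub_sq v)
      Real.pi_div_two_pos.le]
  obtain ⟨S, hS⟩ := exists_schwartzMap_eq_cexp Q_hasTemperateGrowth Real.pi_div_two_pos re_Q_le
  refine ⟨S, fun z t => ?_⟩
  rw [hS, coherentState, gaussWin, ← exp_add, ← exp_add]
  simp only [Q]
  push_cast
  ring_nf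

/-- The adjoint of the short-time Fourier transform: the superposition of the wave packets
`coherentState z` with amplitudes `Ψ z`. -/
noncomputable def stftSynthesis (Ψ : PhaseSpace ι → ℂ) (t : EuclideanSpace ℝ ι) : ℂ :=
  ∫ z, Ψ z * coherentState z t

theorem exists_schwartzMap_eq_stftSynthesis (hΨ : Integrable Ψ) (hsupp : HasCompactSupport Ψ) :
    ∃ g : 𝓢(EuclideanSpace ℝ ι, ℂ), ⇑g = stftSynthesis Ψ := by
  let weight (z : PhaseSpace ι) : ℂ := cexp (Real.pi * (‖z.1‖ ^ 2 + ‖z.2‖ ^ 2) : ℝ)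
  have integrable_mul_weight : Integrable fun z => Ψ z * weight z := by
    have support_subset : Function.support (fun z => Ψ z * weight z) ⊆ tsupport Ψ :=
      (Function.support_mul_subset_left _ _).trans (subset_tsupport Ψ)
    rw [← integrableOn_iff_integrable_of_support_subset support_subset]
    exact hΨ.integrableOn.mul_continuousOn (by fun_prop) hsupp
  obtain ⟨S, hS⟩ := exists_schwartzMap_eq_cexp_mul_coherentState (ι := ι)
  obtain ⟨g, hg⟩ := exists_schwartzMap_eq_integral_smul integrable_mul_weight S
  refine ⟨g, funext fun t => (hg t).trans (integral_congr_ae (.of_forall fun z => ?_))⟩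
  simp only [hS, weight, smul_eq_mul]
  rw [mul_assoc, ← mul_assoc (cexp _), ← exp_add, ← Complex.ofReal_add, add_neg_cancel,
    Complex.ofReal_zero, Complex.exp_zero, one_mul]

theorem integrable_mul_coherentState (hΨ : Integrable Ψ) :
    Integrable (fun v : PhaseSpace ι × EuclideanSpace ℝ ι => Ψ v.1 * coherentState v.1 v.2)
      (volume.prod volume) := by
  have aestronglyMeasurable_integrand : AEStronglyMeasurable
      (fun v : PhaseSpace ι × EuclideanSpace ℝ ι => Ψ v.1 * coherentState v.1 v.2)
      (volume.prod volume) :=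
    hΨ.1.comp_fst.mul continuous_coherentState.aestronglyMeasurable
  rw [integrable_prod_iff aestronglyMeasurable_integrand]
  refine ⟨.of_forall fun z => (integrable_coherentState z).const_mul (Ψ z), ?_⟩
  simp only [norm_mul, integral_const_mul, integral_norm_coherentState]
  exact hΨ.norm.mul_const _

theorem integral_mul_conj_stftSynthesis (hΨ : Integrable Ψ) (hH : Measurable H)
    (hM : ∀ t, ‖H t‖ ≤ M) :
    ∫ t, H t * starRingEnd ℂ (stftSynthesis Ψ t) =
      ∫ z, starRingEnd ℂ (Ψ z) * STFT H z.2 z.1 := by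
  have integrable_integrand : Integrable (Function.uncurry fun t z =>
      H t * starRingEnd ℂ (Ψ z * coherentState z t)) (volume.prod volume) :=
    (conjCLE.toContinuousLinearMap.integrable_comp
      (integrable_mul_coherentState hΨ).swap).bdd_mul (c := M)
      (hH.comp measurable_fst).aestronglyMeasurable (.of_forall fun v => hM v.1)
  calc ∫ t, H t * starRingEnd ℂ (stftSynthesis Ψ t)
    _ = ∫ t, ∫ z, H t * starRingEnd ℂ (Ψ z * coherentState z t) := by
        simp_rw [stftSynthesis, ← integral_conj, integral_const_mul]
    _ = ∫ z, ∫ t, H t * starRingEnd ℂ (Ψ z * coherentState z t) :=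
        integral_integral_swap integrable_integrand
    _ = ∫ z, starRingEnd ℂ (Ψ z) * STFT H z.2 z.1 := by
        simp_rw [STFT_eq_integral_mul_conj_coherentState, ← integral_const_mul, map_mul,
          mul_left_comm]

theorem STFT_stftSynthesis (hΨ : Integrable Ψ) (w : PhaseSpace ι) :
    STFT (stftSynthesis Ψ) w.2 w.1 =
      starRingEnd ℂ (∫ z, starRingEnd ℂ (Ψ z) * STFT (coherentState w) z.2 z.1) := by
  have measurable_coherentState : Measurable (coherentState w) :=
    (continuous_coherentState.comp (.prodMk_right w)).measurable
  rw [← integral_mul_conj_stftSynthesis hΨ measurable_coherentState (norm_coherentState_le_one w),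
    ← integral_conj, STFT_eq_integral_mul_conj_coherentState]
  simp_rw [map_mul, conj_conj, mul_comm]

theorem enorm_STFT_stftSynthesis_le (hΨ : Integrable Ψ) (w : PhaseSpace ι) :
    ‖STFT (stftSynthesis Ψ) w.2 w.1‖ₑ ≤
      ((fun z => ‖Ψ z‖ₑ) ⋆ₗ[volume.prod volume] gaussianAmbiguity) w := by
  rw [STFT_stftSynthesis hΨ, RCLike.enorm_conj, lconvolution_def]
  refine (enorm_integral_le_lintegral_enorm _).trans_eq (lintegral_congr fun z => ?_)
  rw [enorm_mul, RCLike.enorm_conj, enorm_STFT_coherentState_comm, enorm_STFT_coherentState,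
    neg_add_eq_sub]

theorem modNorm_stftSynthesis_le {p p' q q' : ℝ≥0∞} [p.HolderConjugate p'] [q.HolderConjugate q']
    (hΨ : Integrable Ψ) (hΨm : Measurable Ψ) :
    modNorm p q (stftSynthesis Ψ) ≤ (∫⁻ w : PhaseSpace ι, gaussianAmbiguity w) *
      mixedNorm volume volume p q fun z => ‖Ψ z‖ₑ := by
  calc modNorm p q (stftSynthesis Ψ)
    _ ≤ mixedNorm volume volume p q
          ((fun z => ‖Ψ z‖ₑ) ⋆ₗ[volume.prod volume] gaussianAmbiguity) := by
        rw [modNorm_eq_mixedNorm]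
        exact mixedNorm_mono fun w => enorm_STFT_stftSynthesis_le hΨ w
    _ = mixedNorm volume volume p q
          (gaussianAmbiguity ⋆ₗ[volume.prod volume] fun z => ‖Ψ z‖ₑ) := by
        have := isNegInvariant_prod (μ := (volume : Measure (EuclideanSpace ℝ ι)))
          (ν := (volume : Measure (EuclideanSpace ℝ ι)))
        rw [lconvolution_comm]
    _ ≤ (∫⁻ w : PhaseSpace ι, gaussianAmbiguity w) * mixedNorm volume volume p q fun z => ‖Ψ z‖ₑ :=
        mixedNorm_lconvolution_le (p' := p') (q' := q') measurable_gaussianAmbiguity hΨm.enorm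

end Synthesis

section Duality

theorem exists_measurable_conj_mul_eq_norm_mul {γ : Type*} [MeasurableSpace γ] {S : γ → ℂ}
    {v : γ → ℝ≥0} (hS : Measurable S) (hv : Measurable v) :
    ∃ Ψ : γ → ℂ, Measurable Ψ ∧ (∀ z, ‖Ψ z‖ ≤ v z) ∧
      ∀ z, starRingEnd ℂ (Ψ z) * S z = (‖S z‖ * v z : ℝ) := by
  refine ⟨fun z => S z / ‖S z‖ * (v z : ℝ), by fun_prop, fun z => ?_, fun z => ?_⟩
  · rw [norm_mul, norm_div, norm_real, norm_real, norm_norm, NNReal.norm_eq]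
    exact mul_le_of_le_one_left (v z).2 (div_self_le_one _)
  · rcases eq_or_ne (S z) 0 with hz | hz
    · simp [hz]
    · have norm_ne_zero : (‖S z‖ : ℂ) ≠ 0 := by simpa using hz
      rw [map_mul, map_div₀, conj_ofReal, conj_ofReal, mul_right_comm, div_mul_eq_mul_div,
        conj_mul', pow_two, mul_div_cancel_right₀ _ norm_ne_zero, Complex.ofReal_mul]

theorem integrable_of_hasCompactSupport_of_bounded {γ E : Type*} [TopologicalSpace γ]
    [MeasurableSpace γ] {μ : Measure γ} [IsFiniteMeasureOnCompacts μ] [NormedAddCommGroup E]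
    {Ψ : γ → E} {B : ℝ} (hΨ : AEStronglyMeasurable Ψ μ) (hsupp : HasCompactSupport Ψ)
    (hB : ∀ z, ‖Ψ z‖ ≤ B) : Integrable Ψ μ := by
  rw [← integrableOn_iff_integrable_of_support_subset (subset_tsupport Ψ)]
  exact Measure.integrableOn_of_bounded hsupp.measure_ne_top hΨ (.of_forall hB)

theorem enorm_integral_ofReal_of_nonneg {γ : Type*} [MeasurableSpace γ] {μ : Measure γ} {g : γ → ℝ}
    (hg : Integrable g μ) (hnonneg : ∀ z, 0 ≤ g z) :
    ‖∫ z, (g z : ℂ) ∂μ‖ₑ = ∫⁻ z, ENNReal.ofReal (g z) ∂μ := by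
  rw [integral_complex_ofReal, ← ofReal_norm, norm_real,
    Real.norm_of_nonneg (integral_nonneg hnonneg),
    ofReal_integral_eq_lintegral_ofReal hg (.of_forall hnonneg)]

variable {ι : Type*} [Fintype ι] {H : EuclideanSpace ℝ ι → ℂ} {M : ℝ}

theorem exists_stftSynthesis_lintegral_enorm_STFT_mul_eq (hH : Measurable H)
    (hM : ∀ t, ‖H t‖ ≤ M) {v : PhaseSpace ι → ℝ≥0} (hv : Measurable v)
    (hsupp : HasCompactSupport v) (hbdd : BddAbove (Set.range v)) :
    ∃ Ψ : PhaseSpace ι → ℂ, Measurable Ψ ∧ Integrable Ψ ∧ HasCompactSupport Ψ ∧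
      (∀ z, ‖Ψ z‖ₑ ≤ v z) ∧ ∫⁻ z : PhaseSpace ι, ‖STFT H z.2 z.1‖ₑ * v z =
        ‖∫ t, H t * starRingEnd ℂ (stftSynthesis Ψ t)‖ₑ := by
  have measurable_S := measurable_STFT hH
  obtain ⟨Ψ, measurable_Ψ, norm_Ψ_le, conj_Ψ_mul⟩ :=
    exists_measurable_conj_mul_eq_norm_mul measurable_S hv
  obtain ⟨B, hB⟩ := hbdd
  have hasCompactSupport_Ψ : HasCompactSupport Ψ :=
    hsupp.mono fun z hΨz hvz => hΨz (norm_le_zero_iff.mp (by simpa [hvz] using norm_Ψ_le z))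
  have integrable_Ψ : Integrable Ψ :=
    integrable_of_hasCompactSupport_of_bounded (B := B) measurable_Ψ.aestronglyMeasurable
      hasCompactSupport_Ψ fun z => (norm_Ψ_le z).trans (by exact_mod_cast hB ⟨z, rfl⟩)
  have integrable_norm_mul : Integrable fun z : PhaseSpace ι => ‖STFT H z.2 z.1‖ * (v z : ℝ) := by
    have integrable_conj_mul : Integrable fun z => starRingEnd ℂ (Ψ z) * STFT H z.2 z.1 :=
      (conjCLE.toContinuousLinearMap.integrable_comp integrable_Ψ).mul_bdd
        measurable_S.aestronglyMeasurable (.of_forall fun z => norm_STFT_le hM z.2 z.1)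
    simpa only [conj_Ψ_mul, RCLike.re_to_complex, ofReal_re] using integrable_conj_mul.re
  refine ⟨Ψ, measurable_Ψ, integrable_Ψ, hasCompactSupport_Ψ, fun z => ?_, ?_⟩
  · exact enorm_le_coe.mpr (norm_Ψ_le z)
  · rw [integral_mul_conj_stftSynthesis integrable_Ψ hH hM]
    simp_rw [conj_Ψ_mul]
    rw [enorm_integral_ofReal_of_nonneg integrable_norm_mul fun z => by positivity]
    refine lintegral_congr fun z => ?_
    rw [ENNReal.ofReal_mul (norm_nonneg _), ofReal_norm, ENNReal.ofReal_coe_nnreal]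

theorem modNorm_le_of_forall_schwartzMap_enorm_integral_mul_conj_le {p p' q q' C : ℝ≥0∞}
    [p.HolderConjugate p'] [q.HolderConjugate q'] (hH : Measurable H) (hM : ∀ t, ‖H t‖ ≤ M)
    (h : ∀ g : 𝓢(EuclideanSpace ℝ ι, ℂ),
      ‖∫ t, H t * starRingEnd ℂ (g t)‖ₑ ≤ C * modNorm p q g) :
    modNorm p' q' H ≤ C * ∫⁻ w : PhaseSpace ι, gaussianAmbiguity w := by
  rw [modNorm_eq_mixedNorm]
  refine mixedNorm_le_of_forall_hasCompactSupport_lintegral_mul_le (p := p) (q := q)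
    (measurable_STFT hH).enorm fun v hv hsupp hbdd => ?_
  obtain ⟨Ψ, measurable_Ψ, integrable_Ψ, hasCompactSupport_Ψ, enorm_Ψ_le, lintegral_eq⟩ :=
    exists_stftSynthesis_lintegral_enorm_STFT_mul_eq hH hM hv hsupp hbdd
  obtain ⟨g, hg⟩ := exists_schwartzMap_eq_stftSynthesis integrable_Ψ hasCompactSupport_Ψ
  calc ∫⁻ z : PhaseSpace ι, ‖STFT H z.2 z.1‖ₑ * v z
    _ = ‖∫ t, H t * starRingEnd ℂ (g t)‖ₑ := by rw [hg]; exact lintegral_eq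
    _ ≤ C * modNorm p q (stftSynthesis Ψ) := hg ▸ h g
    _ ≤ C * ((∫⁻ w : PhaseSpace ι, gaussianAmbiguity w) *
          mixedNorm volume volume p q fun z => ‖Ψ z‖ₑ) := by
        gcongr
        exact modNorm_stftSynthesis_le (p' := p') (q' := q') integrable_Ψ measurable_Ψ
    _ ≤ C * ((∫⁻ w : PhaseSpace ι, gaussianAmbiguity w) *
          mixedNorm volume volume p q fun z => v z) := by
        gcongr
        exact mixedNorm_mono enorm_Ψ_le
    _ = C * (∫⁻ w : PhaseSpace ι, gaussianAmbiguity w) *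
          mixedNorm volume volume p q fun z => v z := (mul_assoc _ _ _).symm

end Duality

section Moyal

variable {ι : Type*} [Fintype ι] {h : EuclideanSpace ℝ ι → ℂ} {M : ℝ}

theorem STFT_eq_fourier (F : EuclideanSpace ℝ ι → ℂ) (x ω : EuclideanSpace ℝ ι) :
    STFT F x ω = FourierTransform.fourier (fun t => F t * gaussWin (t - x)) ω := by
  rw [Real.fourier_eq', STFT]
  refine integral_congr_ae (.of_forall fun t => ?_)
  simp only [conj_gaussWin, smul_eq_mul, real_inner_comm ω t]
  rw [mul_comm]
  push_cast
  ring_nf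

theorem integral_conj_fourier_mul_fourier {k : EuclideanSpace ℝ ι → ℂ} (hk : Integrable k)
    (F : 𝓢(EuclideanSpace ℝ ι, ℂ)) :
    ∫ ω, starRingEnd ℂ (FourierTransform.fourier k ω) * FourierTransform.fourier (⇑F) ω =
      ∫ t, starRingEnd ℂ (k t) * F t := by
  have fourier_inversion (t : EuclideanSpace ℝ ι) :
      VectorFourier.fourierIntegral Real.fourierChar volume
        (-(innerₗ (EuclideanSpace ℝ ι)).flip) (FourierTransform.fourier F) t = F t := by
    have fourierInv_fourier :
        FourierTransformInv.fourierInv (FourierTransform.fourier F) t = F t := by simp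
    rw [← fourierInv_fourier, fourierInv_coe]
    simp [FourierTransformInv.fourierInv]
  have parseval := VectorFourier.integral_sesq_fourierIntegral_eq_neg_flip
    (innerSL ℂ : ℂ →L⋆[ℂ] ℂ →L[ℂ] ℂ) (L := innerₗ (EuclideanSpace ℝ ι)) (μ := volume)
    (ν := volume) Real.continuous_fourierChar continuous_inner hk
    (FourierTransform.fourier F).integrable
  simp_rw [fourier_inversion, innerSL_apply_apply, RCLike.inner_apply', fourier_coe] at parseval
  exact parseval

theorem integral_conj_STFT_mul_STFT (hh : Measurable h) (hM : ∀ t, ‖h t‖ ≤ M)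
    (f : 𝓢(EuclideanSpace ℝ ι, ℂ)) (x : EuclideanSpace ℝ ι) :
    ∫ ω, starRingEnd ℂ (STFT h x ω) * STFT f x ω =
      ∫ t, starRingEnd ℂ (h t) * f t * (gaussWin (t - x) * gaussWin (t - x)) := by
  have hasTemperateGrowth_window :
      (fun t : EuclideanSpace ℝ ι => gaussWin (t - x)).HasTemperateGrowth :=
    hasTemperateGrowth_gaussWin.comp (Function.HasTemperateGrowth.id'.sub (.const x))
  have mul_window_eq : (fun t => f t * gaussWin (t - x)) =
      ⇑(smulLeftCLM ℂ (fun t : EuclideanSpace ℝ ι => gaussWin (t - x)) f) := by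
    ext t
    rw [smulLeftCLM_apply_apply hasTemperateGrowth_window, smul_eq_mul, mul_comm]
  have integrable_mul_window : Integrable fun t => h t * gaussWin (t - x) :=
    (integrable_gaussWin.comp_sub_right x).bdd_mul (c := M) hh.aestronglyMeasurable
      (.of_forall hM)
  simp_rw [STFT_eq_fourier, mul_window_eq]
  rw [integral_conj_fourier_mul_fourier integrable_mul_window, ← mul_window_eq]
  refine integral_congr_ae (.of_forall fun t => ?_)
  simp only [map_mul, conj_gaussWin]
  ring

theorem integrable_gaussWin_mul_gaussWin :
    Integrable fun t : EuclideanSpace ℝ ι => gaussWin t * gaussWin t :=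
  integrable_gaussWin.bdd_mul (c := 1) continuous_gaussWin.aestronglyMeasurable
    (.of_forall norm_gaussWin_le_one)

theorem integral_integral_mul_gaussWin_sub_sq {k : EuclideanSpace ℝ ι → ℂ} (hk : Integrable k) :
    ∫ x, ∫ t, k t * (gaussWin (t - x) * gaussWin (t - x)) =
      (∫ t, k t) * ∫ t : EuclideanSpace ℝ ι, gaussWin t * gaussWin t := by
  have gaussWin_sub_comm (t x : EuclideanSpace ℝ ι) : gaussWin (t - x) = gaussWin (x - t) := by
    simp_rw [gaussWin, norm_sub_rev]
  simp_rw [gaussWin_sub_comm]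
  exact integral_convolution (ContinuousLinearMap.mul ℝ ℂ) hk integrable_gaussWin_mul_gaussWin

theorem gaussianAmbiguity_zero :
    gaussianAmbiguity (0 : PhaseSpace ι) =
      ‖∫ t : EuclideanSpace ℝ ι, gaussWin t * gaussWin t‖ₑ := by
  simp [gaussianAmbiguity, STFT, conj_gaussWin]

theorem enorm_integral_conj_mul_mul_gaussianAmbiguity_zero_le (hh : Measurable h)
    (hM : ∀ t, ‖h t‖ ≤ M) (f : 𝓢(EuclideanSpace ℝ ι, ℂ)) :
    ‖∫ t, starRingEnd ℂ (h t) * f t‖ₑ * gaussianAmbiguity (0 : PhaseSpace ι) ≤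
      ∫⁻ z : PhaseSpace ι, ‖STFT h z.2 z.1‖ₑ * ‖STFT f z.2 z.1‖ₑ := by
  have integrable_conj_mul : Integrable fun t => starRingEnd ℂ (h t) * f t :=
    f.integrable.bdd_mul (c := M) (continuous_conj.measurable.comp hh).aestronglyMeasurable
      (.of_forall fun t => (RCLike.norm_conj (h t)).trans_le (hM t))
  have measurable_product : Measurable fun z : PhaseSpace ι =>
      ‖STFT h z.2 z.1‖ₑ * ‖STFT f z.2 z.1‖ₑ :=
    (measurable_STFT hh).enorm.mul (measurable_STFT f.continuous.measurable).enorm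
  calc ‖∫ t, starRingEnd ℂ (h t) * f t‖ₑ * gaussianAmbiguity (0 : PhaseSpace ι)
    _ = ‖∫ x, ∫ ω, starRingEnd ℂ (STFT h x ω) * STFT f x ω‖ₑ := by
        simp_rw [integral_conj_STFT_mul_STFT hh hM]
        rw [gaussianAmbiguity_zero, ← enorm_mul,
          integral_integral_mul_gaussWin_sub_sq integrable_conj_mul]
    _ ≤ ∫⁻ x, ∫⁻ ω, ‖starRingEnd ℂ (STFT h x ω) * STFT f x ω‖ₑ :=
        (enorm_integral_le_lintegral_enorm _).trans
          (lintegral_mono fun x => enorm_integral_le_lintegral_enorm _)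
    _ = ∫⁻ z : PhaseSpace ι, ‖STFT h z.2 z.1‖ₑ * ‖STFT f z.2 z.1‖ₑ := by
        simp_rw [enorm_mul, RCLike.enorm_conj]
        exact (lintegral_prod_symm' _ measurable_product).symm

theorem enorm_integral_conj_mul_le {p p' q q' : ℝ≥0∞} [p.HolderConjugate p']
    [q.HolderConjugate q'] (hh : Measurable h) (hM : ∀ t, ‖h t‖ ≤ M)
    (f : 𝓢(EuclideanSpace ℝ ι, ℂ)) :
    ‖∫ t, starRingEnd ℂ (h t) * f t‖ₑ ≤
      (gaussianAmbiguity (0 : PhaseSpace ι))⁻¹ * (modNorm p q h * modNorm p' q' f) := by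
  rw [mul_comm (_ ⁻¹), ← div_eq_mul_inv,
    ENNReal.le_div_iff_mul_le (.inl (gaussianAmbiguity_ne_zero 0)) (.inl enorm_ne_top)]
  exact (enorm_integral_conj_mul_mul_gaussianAmbiguity_zero_le hh hM f).trans
    (lintegral_mul_le_mixedNorm_mul_mixedNorm (measurable_STFT hh).enorm
      (measurable_STFT f.continuous.measurable).enorm)

end Moyal

section Weyl

variable {d : ℕ}

@[fun_prop]
theorem continuous_pairE :
    Continuous fun v : EuclideanSpace ℝ (Fin d) × EuclideanSpace ℝ (Fin d) => pairE v.1 v.2 := by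
  refine (PiLp.continuous_toLp 2 _).comp (continuous_pi fun i => ?_)
  rcases i with i | i <;> simp only [Sum.elim_inl, Sum.elim_inr] <;> fun_prop

theorem norm_right_le_norm_pairE (x ω : EuclideanSpace ℝ (Fin d)) : ‖ω‖ ≤ ‖pairE x ω‖ := by
  rw [EuclideanSpace.norm_eq, EuclideanSpace.norm_eq, Fintype.sum_sum_type]
  exact Real.sqrt_le_sqrt (le_add_of_nonneg_left (by positivity))

/-- The integral kernel of the Weyl operator with symbol `σ`. -/
noncomputable def weylKernel (σ : EuclideanSpace ℝ (Fin d ⊕ Fin d) → ℂ)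
    (x y : EuclideanSpace ℝ (Fin d)) : ℂ :=
  ∫ ω, cexp (I * (2 * Real.pi * inner ℝ (x - y) ω)) * σ (pairE ((2 : ℝ)⁻¹ • (x + y)) ω)

theorem weylOp_eq_integral_weylKernel_mul (σ : EuclideanSpace ℝ (Fin d ⊕ Fin d) → ℂ)
    (f : EuclideanSpace ℝ (Fin d) → ℂ) (x : EuclideanSpace ℝ (Fin d)) :
    weylOp σ f x = ∫ y, weylKernel σ x y * f y := by
  simp_rw [weylOp, weylKernel, integral_mul_const]

theorem conj_weylKernel (σ : EuclideanSpace ℝ (Fin d ⊕ Fin d) → ℂ)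
    (x y : EuclideanSpace ℝ (Fin d)) :
    starRingEnd ℂ (weylKernel σ x y) = weylKernel (fun z => starRingEnd ℂ (σ z)) y x := by
  simp_rw [weylKernel, ← integral_conj, map_mul, conj_cexp_I_mul_two_pi_mul, ← neg_sub y x,
    inner_neg_left, Complex.ofReal_neg, mul_neg, neg_neg, add_comm]

theorem measurable_weylKernel {σ : EuclideanSpace ℝ (Fin d ⊕ Fin d) → ℂ} (hσ : Measurable σ) :
    Measurable fun v : EuclideanSpace ℝ (Fin d) × EuclideanSpace ℝ (Fin d) =>
      weylKernel σ v.1 v.2 := by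
  have measurable_integrand : Measurable fun v :
      (EuclideanSpace ℝ (Fin d) × EuclideanSpace ℝ (Fin d)) × EuclideanSpace ℝ (Fin d) =>
      cexp (I * (2 * Real.pi * inner ℝ (v.1.1 - v.1.2) v.2)) *
        σ (pairE ((2 : ℝ)⁻¹ • (v.1.1 + v.1.2)) v.2) := by
    refine .mul (by fun_prop) (hσ.comp ?_)
    exact Continuous.measurable (by fun_prop)
  exact (measurable_integrand.stronglyMeasurable.integral_prod_right' (ν := volume)).measurable

theorem exists_norm_schwartzMap_pairE_le (σ : 𝓢(EuclideanSpace ℝ (Fin d ⊕ Fin d), ℂ)) :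
    ∃ B : ℝ, ∀ x ω : EuclideanSpace ℝ (Fin d),
      ‖σ (pairE x ω)‖ ≤ B * (1 + ‖ω‖) ^ (-((d + 1 : ℕ) : ℝ)) := by
  refine ⟨2 ^ (d + 1) * ((Finset.Iic (d + 1, 0)).sup fun m => SchwartzMap.seminorm ℝ m.1 m.2) σ,
    fun x ω => ?_⟩
  have decay := one_add_le_sup_seminorm_apply (𝕜 := ℝ) (m := (d + 1, 0)) le_rfl le_rfl σ
    (pairE x ω)
  rw [norm_iteratedFDeriv_zero] at decay
  rw [Real.rpow_neg (by positivity), Real.rpow_natCast, ← div_eq_mul_inv,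
    le_div_iff₀ (by positivity), mul_comm]
  refine le_trans ?_ decay
  gcongr
  exact norm_right_le_norm_pairE x ω

theorem exists_norm_weylKernel_le (σ : 𝓢(EuclideanSpace ℝ (Fin d ⊕ Fin d), ℂ)) :
    ∃ B : ℝ, ∀ x y, ‖weylKernel σ x y‖ ≤ B := by
  obtain ⟨B, hB⟩ := exists_norm_schwartzMap_pairE_le σ
  have integrable_majorant :
      Integrable fun ω : EuclideanSpace ℝ (Fin d) => B * (1 + ‖ω‖) ^ (-((d + 1 : ℕ) : ℝ)) :=
    (integrable_one_add_norm (by simp)).const_mul B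
  refine ⟨_, fun x y => norm_integral_le_of_norm_le integrable_majorant (.of_forall fun ω => ?_)⟩
  rw [norm_mul, norm_cexp_I_mul_two_pi_mul, one_mul]
  exact hB _ ω

theorem measurable_weylOp {σ : EuclideanSpace ℝ (Fin d ⊕ Fin d) → ℂ}
    {f : EuclideanSpace ℝ (Fin d) → ℂ} (hσ : Measurable σ) (hf : Measurable f) :
    Measurable (weylOp σ f) := by
  have measurable_integrand :=
    (measurable_weylKernel hσ).mul (hf.comp measurable_snd)
  have weylOp_eq := funext (weylOp_eq_integral_weylKernel_mul σ f)
  exact weylOp_eq ▸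
    (measurable_integrand.stronglyMeasurable.integral_prod_right' (ν := volume)).measurable

theorem exists_norm_weylOp_le (σ : 𝓢(EuclideanSpace ℝ (Fin d ⊕ Fin d), ℂ))
    {f : EuclideanSpace ℝ (Fin d) → ℂ} (hf : Integrable f) :
    ∃ M : ℝ, ∀ x, ‖weylOp σ f x‖ ≤ M := by
  obtain ⟨B, hB⟩ := exists_norm_weylKernel_le σ
  refine ⟨∫ y, B * ‖f y‖, fun x => ?_⟩
  rw [weylOp_eq_integral_weylKernel_mul]
  refine norm_integral_le_of_norm_le (hf.norm.const_mul B) (.of_forall fun y => ?_)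
  rw [norm_mul]
  gcongr
  exact hB x y

theorem integral_weylOp_mul_conj (σ : 𝓢(EuclideanSpace ℝ (Fin d ⊕ Fin d), ℂ))
    {f g : EuclideanSpace ℝ (Fin d) → ℂ} (hf : Integrable f) (hg : Integrable g) :
    ∫ x, weylOp σ f x * starRingEnd ℂ (g x) =
      ∫ y, starRingEnd ℂ (weylOp (fun z => starRingEnd ℂ (σ z)) g y) * f y := by
  obtain ⟨B, hB⟩ := exists_norm_weylKernel_le σ
  have integrable_integrand : Integrable (Function.uncurry fun x y =>
      weylKernel σ x y * (starRingEnd ℂ (g x) * f y)) (volume.prod volume) :=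
    ((conjCLE.toContinuousLinearMap.integrable_comp hg).mul_prod hf).bdd_mul (c := B)
      (measurable_weylKernel σ.continuous.measurable).aestronglyMeasurable
      (.of_forall fun v => hB v.1 v.2)
  calc ∫ x, weylOp σ f x * starRingEnd ℂ (g x)
    _ = ∫ x, ∫ y, weylKernel σ x y * (starRingEnd ℂ (g x) * f y) := by
        simp_rw [weylOp_eq_integral_weylKernel_mul, ← integral_mul_const, mul_assoc,
          mul_comm (f _)]
    _ = ∫ y, ∫ x, weylKernel σ x y * (starRingEnd ℂ (g x) * f y) :=
        integral_integral_swap integrable_integrand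
    _ = ∫ y, starRingEnd ℂ (weylOp (fun z => starRingEnd ℂ (σ z)) g y) * f y := by
        simp_rw [weylOp_eq_integral_weylKernel_mul, ← integral_conj, ← integral_mul_const,
          map_mul, conj_weylKernel, conj_conj, mul_assoc]

/-- The complex conjugate of a Schwartz function; on symbols it corresponds to passing to the
adjoint Weyl operator. -/
noncomputable def conjSchwartz {V : Type*} [NormedAddCommGroup V] [NormedSpace ℝ V] (σ : 𝓢(V, ℂ)) :
    𝓢(V, ℂ) :=
  postcompCLM conjCLE.toContinuousLinearMap σ

theorem coe_conjSchwartz {V : Type*} [NormedAddCommGroup V] [NormedSpace ℝ V] (σ : 𝓢(V, ℂ)) :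
    ⇑(conjSchwartz σ) = fun z => starRingEnd ℂ (σ z) :=
  rfl

theorem modNorm_weylOp_le_of_forall_modNorm_weylOp_conj_le {r r' s s' u u' v v' A : ℝ≥0∞}
    [r.HolderConjugate r'] [s.HolderConjugate s'] [u.HolderConjugate u'] [v.HolderConjugate v']
    (σ : 𝓢(EuclideanSpace ℝ (Fin d ⊕ Fin d), ℂ))
    (h : ∀ g : 𝓢(EuclideanSpace ℝ (Fin d), ℂ),
      modNorm u v (weylOp (conjSchwartz σ) g) ≤ A * modNorm r s g)
    (f : 𝓢(EuclideanSpace ℝ (Fin d), ℂ)) :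
    modNorm r' s' (weylOp σ f) ≤ ((gaussianAmbiguity (0 : PhaseSpace (Fin d)))⁻¹ *
      ∫⁻ w : PhaseSpace (Fin d), gaussianAmbiguity w) * A * modNorm u' v' f := by
  have measurable_schwartz {ι : Type} [Fintype ι] (g : 𝓢(EuclideanSpace ℝ ι, ℂ)) : Measurable g :=
    g.continuous.measurable
  obtain ⟨M, hM⟩ := exists_norm_weylOp_le σ f.integrable
  refine (modNorm_le_of_forall_schwartzMap_enorm_integral_mul_conj_le (p := r) (q := s)
    (C := (gaussianAmbiguity (0 : PhaseSpace (Fin d)))⁻¹ * (A * modNorm u' v' f))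
    (measurable_weylOp (measurable_schwartz σ) (measurable_schwartz f)) hM fun g => ?_).trans_eq
    (by ring)
  obtain ⟨M', hM'⟩ := exists_norm_weylOp_le (conjSchwartz σ) g.integrable
  calc ‖∫ x, weylOp σ f x * starRingEnd ℂ (g x)‖ₑ
    _ = ‖∫ y, starRingEnd ℂ (weylOp (conjSchwartz σ) g y) * f y‖ₑ := by
        rw [integral_weylOp_mul_conj σ f.integrable g.integrable, coe_conjSchwartz]
    _ ≤ (gaussianAmbiguity (0 : PhaseSpace (Fin d)))⁻¹ *
          (modNorm u v (weylOp (conjSchwartz σ) g) * modNorm u' v' f) :=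
        enorm_integral_conj_mul_le
          (measurable_weylOp (measurable_schwartz (conjSchwartz σ)) (measurable_schwartz g)) hM' f
    _ ≤ (gaussianAmbiguity (0 : PhaseSpace (Fin d)))⁻¹ *
          (A * modNorm r s g * modNorm u' v' f) := by
        gcongr
        exact h g
    _ = (gaussianAmbiguity (0 : PhaseSpace (Fin d)))⁻¹ * (A * modNorm u' v' f) *
          modNorm r s g := by ring

end Weyl

theorem weyl_modulation_duality_general {d : ℕ} {r r' s s' u u' v v' : ℝ≥0∞}
    [r.HolderConjugate r'] [s.HolderConjugate s'] [u.HolderConjugate u'] [v.HolderConjugate v']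
    (N : 𝓢(EuclideanSpace ℝ (Fin d ⊕ Fin d), ℂ) → ℝ≥0∞) (hN : ∀ σ, N (conjSchwartz σ) = N σ)
    (h : ∃ C : ℝ, 0 < C ∧ ∀ (σ : 𝓢(EuclideanSpace ℝ (Fin d ⊕ Fin d), ℂ))
      (f : 𝓢(EuclideanSpace ℝ (Fin d), ℂ)),
      modNorm u v (weylOp σ f) ≤ ENNReal.ofReal C * N σ * modNorm r s f) :
    ∃ C' : ℝ, 0 < C' ∧ ∀ (σ : 𝓢(EuclideanSpace ℝ (Fin d ⊕ Fin d), ℂ))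
      (f : 𝓢(EuclideanSpace ℝ (Fin d), ℂ)),
      modNorm r' s' (weylOp σ f) ≤ ENNReal.ofReal C' * N σ * modNorm u' v' f := by
  obtain ⟨C, hC, h⟩ := h
  set K := (gaussianAmbiguity (0 : PhaseSpace (Fin d)))⁻¹ *
    ∫⁻ w : PhaseSpace (Fin d), gaussianAmbiguity w
  have K_ne_top : K ≠ ∞ :=
    ENNReal.mul_ne_top (ENNReal.inv_ne_top.mpr (gaussianAmbiguity_ne_zero 0))
      lintegral_gaussianAmbiguity_ne_top
  refine ⟨(K.toReal + 1) * C, by positivity, fun σ f => ?_⟩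
  calc modNorm r' s' (weylOp σ f)
    _ ≤ K * (ENNReal.ofReal C * N σ) * modNorm u' v' f :=
        modNorm_weylOp_le_of_forall_modNorm_weylOp_conj_le (r := r) (s := s) (u := u) (v := v) σ
          (fun g => hN σ ▸ h (conjSchwartz σ) g) f
    _ ≤ ENNReal.ofReal (K.toReal + 1) * (ENNReal.ofReal C * N σ) * modNorm u' v' f := by
        gcongr
        exact ENNReal.le_ofReal_iff_toReal_le K_ne_top (by positivity) |>.mpr (by linarith)
    _ = ENNReal.ofReal ((K.toReal + 1) * C) * N σ * modNorm u' v' f := by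
        rw [ENNReal.ofReal_mul (by positivity)]
        ring

/-- duality for Weyl operators on modulation spaces. -/
theorem weyl_modulation_duality (d : ℕ) (p q r s : ℝ≥0∞)
    (hp : 1 ≤ p) (hq : 1 ≤ q) (hr : 1 ≤ r) (hs : 1 ≤ s)
    (h : ∃ C : ℝ, 0 < C ∧
      ∀ (σ : SchwartzMap (EuclideanSpace ℝ (Fin d ⊕ Fin d)) ℂ)
        (f : SchwartzMap (EuclideanSpace ℝ (Fin d)) ℂ),
        modNorm r s (weylOp ⇑σ ⇑f) ≤
          ENNReal.ofReal C * modNorm p q ⇑σ * modNorm r s ⇑f) :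
    ∃ C' : ℝ, 0 < C' ∧
      ∀ (σ : SchwartzMap (EuclideanSpace ℝ (Fin d ⊕ Fin d)) ℂ)
        (f : SchwartzMap (EuclideanSpace ℝ (Fin d)) ℂ),
        modNorm (dualExp r) (dualExp s) (weylOp ⇑σ ⇑f) ≤
          ENNReal.ofReal C' * modNorm p q ⇑σ *
            modNorm (dualExp r) (dualExp s) ⇑f := by
  have := holderConjugate_dualExp hr
  have := holderConjugate_dualExp hs
  exact weyl_modulation_duality_general (fun σ => modNorm p q σ) (fun σ => modNorm_conj p q σ) h
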